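/- Let b ≥ 3 be an integer and α = (b+√(b²+4))/2, so that α > 3 is a quadratic unit with conjugate α₂ = −1/α < 0. Define integer sequences (p_n) and (q_n) by p₀ = 0, p₂ = b, p_{2n+2} = (b²+2)·p_{2n} − p_{2n−2}, p_{2n−1} = p_{2n−2} + p_{2n}, and q₀ = 1, q₂ = b²+3, q_{2n+2} = (b²+2)·q_{2n} − q_{2n−2}, q_{2n−1} = q_{2n−2} + q_{2n} for n ≥ 1. Then the sequence (p_n/q_n)_{n≥0} is strictly increasing and converges to b/(1+α²), and 𝓛(α) ∩ [0, b/(1+α²)] = { p_n/q_n : n = 0, 1, 2, … } ∪ { b/(1+α²) }. Moreover the set X_∞ = { ξ ∈ ℝ : limsup_{n→∞} ‖ξ·α^n‖ = b/(1+α²) } is uncountable. -/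

import Mathlib

/-- Distance from `x` to the nearest integer. -/
noncomputable def distNearestInt (x : ℝ) : ℝ := |x - round x|

/-- `limsup_{n→∞} ‖ξ·α^n‖`. -/
noncomputable def limsupDist (α ξ : ℝ) : ℝ :=
  Filter.limsup (fun n : ℕ => distNearestInt (ξ * α ^ n)) Filter.atTop

/-- The multiplicative Markoff–Lagrange spectrum `𝓛(α)`. -/
noncomputable def specL (α : ℝ) : Set ℝ := {l : ℝ | ∃ ξ : ℝ, limsupDist α ξ = l}

/-!
The errors `e k = ξ α ^ k - round (ξ α ^ k)` satisfy `e (k + 1) = b * e k + e (k - 1) - a k` with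
integer carries `a k`. A limit of shifts along which `|e|` approaches its limit superior is a
bi-infinite solution in which `|e|` attains that value as its maximum. If the maximum is below
`b / (1 + α ^ 2)`, then all carries lie in `{-1, 0, 1}`, and expanding the solution around a nonzero
carry gives lexicographic constraints on its neighbours. These force the nonzero carries to
alternate in sign and to sit at indices of one parity, so that their partial sums, summed once
more, form an integer function with a discrete mean value property. By the maximum principle
this function stays near a line of rational slope and is mechanical of some denominator `m + 1`,
and the maximum of `|e|` is then exactly `p m / q m`.

Conversely, every bounded solution of the recurrence comes from some `ξ`, because the conjugate
`-1 / α` of `α` only contributes a vanishing term. Carries of period `m + 1` (in steps of two)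
realize `p m / q m`, and carries along ever sparser sets realize `b / (1 + α ^ 2)` in uncountably
many ways.
-/

open Filter Topology

namespace MarkoffLagrange

/-! ### Balanced integer functions -/

section BalancedFunctions

variable {R : Type*} [CommRing R]

/-- The symmetric second difference of `H` at the centre `n` with radius `j`. -/
def secondDiff (H : ℤ → R) (n j : ℤ) : R := H (n + j) + H (n - j) - 2 * H n

/-- Every value of `H` is the mean of two values at a common distance at most `K`: the discrete
mean value property behind the maximum principle below. -/
def IsBalanced (K : ℕ) (H : ℤ → R) : Prop :=
  ∀ n, ∃ N : ℤ, 0 < N ∧ N ≤ K ∧ secondDiff H n N = 0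

/-- `H` is balanced, and at each centre all second differences of radius below the balancing
radius share one of the values `±Q`. -/
def IsSignBalanced (K : ℕ) (Q : ℤ) (H : ℤ → ℤ) : Prop :=
  ∀ n, ∃ N : ℤ, 0 < N ∧ N ≤ K ∧ secondDiff H n N = 0 ∧
    ∃ δ : ℤ, (δ = Q ∨ δ = -Q) ∧ ∀ j, 0 < j → j < N → secondDiff H n j = δ

lemma IsSignBalanced.isBalanced {K : ℕ} {Q : ℤ} {H : ℤ → ℤ} (hH : IsSignBalanced K Q H) :
    IsBalanced K H := fun n ↦
  let ⟨N, hN, hNK, h, _⟩ := hH n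
  ⟨N, hN, hNK, h⟩

lemma IsBalanced.neg {K : ℕ} {H : ℤ → R} (hH : IsBalanced K H) :
    IsBalanced K (fun n ↦ -H n) := fun n ↦ by
  obtain ⟨N, hN, hNK, h⟩ := hH n
  refine ⟨N, hN, hNK, ?_⟩
  rw [secondDiff] at h ⊢
  linear_combination -h

lemma IsBalanced.intCast_sub_affine {K : ℕ} {H : ℤ → ℤ} (hH : IsBalanced K H) (c θ : ℝ) :
    IsBalanced K (fun n ↦ (H n : ℝ) - (c + θ * n)) := fun n ↦ by
  obtain ⟨N, hN, hNK, h⟩ := hH n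
  refine ⟨N, hN, hNK, ?_⟩
  have h' : (H (n + N) : ℝ) + H (n - N) - 2 * H n = 0 := by exact_mod_cast h
  rw [secondDiff]
  push_cast
  linear_combination h'

/-- The maximum principle: the leftmost maximum point on the enlarged interval cannot lie in
`[l, r]`, since its balancing partner to the left would be a maximum point too. -/
lemma IsBalanced.le_of_le_near_endpoints [LinearOrder R] [IsStrictOrderedRing R] {K : ℕ}
    {H : ℤ → R} (hH : IsBalanced K H) {γ : R} {l r : ℤ}
    (hleft : ∀ n, l - K ≤ n → n < l → H n ≤ γ) (hright : ∀ n, r < n → n ≤ r + K → H n ≤ γ)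
    {n : ℤ} (hln : l ≤ n) (hnr : n ≤ r) : H n ≤ γ := by
  by_contra! hγ
  obtain ⟨x, hx, hmax⟩ := (Finset.Icc (l - K) (r + K)).exists_max_image H
    ⟨n, Finset.mem_Icc.2 ⟨by omega, by omega⟩⟩
  obtain ⟨y, hy, hmin⟩ := ((Finset.Icc (l - K) (r + K)).filter (H · = H x)).exists_min_image id
    ⟨x, Finset.mem_filter.2 ⟨hx, rfl⟩⟩
  simp only [Finset.mem_filter, Finset.mem_Icc, id_eq] at hmax hy hmin
  have hyγ : γ < H y := hy.2 ▸ hγ.trans_le (hmax n ⟨by omega, by omega⟩)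
  have hly : l ≤ y := by
    by_contra! h
    exact (hleft y hy.1.1 h).not_gt hyγ
  have hyr : y ≤ r := by
    by_contra! h
    exact (hright y h hy.1.2).not_gt hyγ
  obtain ⟨N, hN, hNK, hbal⟩ := hH y
  have hadd := hmax (y + N) ⟨by omega, by omega⟩
  have hsub := hmax (y - N) ⟨by omega, by omega⟩
  rw [secondDiff, hy.2] at hbal
  have := hmin (y - N) ⟨⟨by omega, by omega⟩, by linarith⟩
  omega

lemma abs_sub_le_of_abs_step_le {f : ℤ → ℝ} {C : ℝ} (hf : ∀ n, |f (n + 1) - f n| ≤ C) {m n : ℤ}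
    (hmn : m ≤ n) : |f n - f m| ≤ C * (n - m) := by
  induction n, hmn using Int.leInduction with
  | base => simp
  | succ n _ ih =>
    push_cast
    linarith [abs_sub_le (f (n + 1)) (f n) (f m), hf n]

lemma IsBalanced.abs_le_of_endpoints_eq_zero {K : ℕ} {G : ℤ → ℝ} (hG : IsBalanced K G) {C : ℝ}
    (hstep : ∀ n, |G (n + 1) - G n| ≤ C) {l r n : ℤ} (hl : G l = 0) (hr : G r = 0)
    (hln : l ≤ n) (hnr : n ≤ r) : |G n| ≤ C * K := by
  have hC : 0 ≤ C := (abs_nonneg _).trans (hstep 0)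
  have hleft : ∀ m, l - K ≤ m → m < l → |G m| ≤ C * K := fun m hm hml ↦ by
    have h := abs_sub_le_of_abs_step_le hstep hml.le
    have hm' : (l : ℝ) - m ≤ K := by exact_mod_cast (by omega : l - m ≤ (K : ℤ))
    rw [hl, zero_sub, abs_neg] at h
    exact h.trans (mul_le_mul_of_nonneg_left hm' hC)
  have hright : ∀ m, r < m → m ≤ r + K → |G m| ≤ C * K := fun m hrm hm ↦ by
    have h := abs_sub_le_of_abs_step_le hstep hrm.le
    have hm' : (m : ℝ) - r ≤ K := by exact_mod_cast (by omega : m - r ≤ (K : ℤ))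
    rw [hr, sub_zero] at h
    exact h.trans (mul_le_mul_of_nonneg_left hm' hC)
  refine abs_le'.2 ⟨?_, ?_⟩
  · exact hG.le_of_le_near_endpoints (fun m h₁ h₂ ↦ (le_abs_self _).trans (hleft m h₁ h₂))
      (fun m h₁ h₂ ↦ (le_abs_self _).trans (hright m h₁ h₂)) hln hnr
  · exact hG.neg.le_of_le_near_endpoints (fun m h₁ h₂ ↦ (neg_le_abs _).trans (hleft m h₁ h₂))
      (fun m h₁ h₂ ↦ (neg_le_abs _).trans (hright m h₁ h₂)) hln hnr

lemma IsBalanced.exists_slope_on {K : ℕ} {H : ℤ → ℤ} (hH : IsBalanced K H)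
    (hstep : ∀ n, |H (n + 1) - H n| ≤ 1) {r : ℕ} (hr : 0 < r) :
    ∃ θ ∈ Set.Icc (-1 : ℝ) 1, ∀ n : ℤ, -r ≤ n → n ≤ r → |(H n : ℝ) - H 0 - θ * n| ≤ 4 * K := by
  have hr' : (0 : ℝ) < r := by exact_mod_cast hr
  have hstep' : ∀ n, |(H (n + 1) : ℝ) - H n| ≤ 1 := fun n ↦ by exact_mod_cast hstep n
  set θ : ℝ := ((H r : ℝ) - H (-r)) / (2 * r) with hθ
  have hθr : θ * (2 * r) = (H r : ℝ) - H (-r) := by rw [hθ]; field_simp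
  have hθ1 : |θ| ≤ 1 := by
    have h := abs_sub_le_of_abs_step_le (f := fun n ↦ (H n : ℝ)) hstep' (by omega : -(r : ℤ) ≤ r)
    rw [← hθr, abs_mul, abs_of_pos (by positivity : (0 : ℝ) < 2 * r)] at h
    push_cast at h
    nlinarith
  set G : ℤ → ℝ := fun n ↦ (H n : ℝ) - ((H (-r) + θ * r) + θ * n) with hG
  have hGstep : ∀ n, |G (n + 1) - G n| ≤ 2 := fun n ↦ by
    have hdiff : G (n + 1) - G n = ((H (n + 1) : ℝ) - H n) - θ := by
      simp only [hG]; push_cast; ring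
    rw [hdiff]
    linarith [abs_sub ((H (n + 1) : ℝ) - H n) θ, hstep' n]
  have hGle : ∀ n : ℤ, -r ≤ n → n ≤ r → |G n| ≤ 2 * K := fun n ↦
    (hH.intCast_sub_affine _ θ).abs_le_of_endpoints_eq_zero hGstep
      (by push_cast; ring) (by push_cast; linear_combination -hθr)
  refine ⟨θ, abs_le.1 hθ1, fun n hn hn' ↦ ?_⟩
  have hdiff : (H n : ℝ) - H 0 - θ * n = G n - G 0 := by simp only [hG]; push_cast; ring
  rw [hdiff]
  linarith [abs_sub (G n) (G 0), hGle n hn hn', hGle 0 (by omega) (by omega)]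

lemma IsBalanced.exists_slope {K : ℕ} {H : ℤ → ℤ} (hH : IsBalanced K H)
    (hstep : ∀ n, |H (n + 1) - H n| ≤ 1) :
    ∃ θ : ℝ, ∀ n : ℤ, |(H n : ℝ) - H 0 - θ * n| ≤ 4 * K := by
  choose t ht ht' using fun r : ℕ ↦ hH.exists_slope_on hstep r.succ_pos
  obtain ⟨θ, -, φ, hφ, hlim⟩ := isCompact_Icc.tendsto_subseq ht
  refine ⟨θ, fun n ↦ ?_⟩
  refine le_of_tendsto (tendsto_const_nhds.sub (hlim.mul_const _)).abs ?_
  filter_upwards [eventually_ge_atTop n.natAbs] with r hr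
  have := hφ.le_apply (x := r)
  exact ht' (φ r) n (by omega) (by omega)

lemma eventually_forall_int_eq_of_abs_sub_lt (x : ℝ) :
    ∀ᶠ ε in 𝓝[>] (0 : ℝ), ∀ z : ℤ, |x - z| < ε → x = z := by
  by_cases hx : ∃ w : ℤ, x = w
  · obtain ⟨w, rfl⟩ := hx
    filter_upwards [Ioo_mem_nhdsGT one_pos] with ε hε z hz
    have hwz : |w - z| < 1 := by exact_mod_cast hz.trans hε.2
    rw [Int.abs_lt_one_iff, sub_eq_zero] at hwz
    rw [hwz]
  · push Not at hx
    filter_upwards [Ioo_mem_nhdsGT (abs_pos.2 (sub_ne_zero.2 (hx (round x))))] with ε hε z hz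
    exact absurd (hz.trans hε.2) (round_le x z).not_gt

/-- At a point where `H n - θ n` nearly attains its supremum the balancing radius `N` nearly
satisfies `θ N ∈ ℤ`; as only finitely many `N` are possible, it does so exactly. -/
lemma IsBalanced.exists_rat_eq_slope {K : ℕ} {H : ℤ → ℤ} (hH : IsBalanced K H) {θ B : ℝ}
    (hθ : ∀ n : ℤ, |(H n : ℝ) - H 0 - θ * n| ≤ B) : ∃ q : ℚ, θ = q := by
  obtain ⟨ε, hgap, hε⟩ := (((Finset.Icc (1 : ℤ) K).eventually_all.2 fun N _ ↦
    eventually_forall_int_eq_of_abs_sub_lt (θ * N)).and self_mem_nhdsWithin).exists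
  set G : ℤ → ℝ := fun n ↦ (H n : ℝ) - (H 0 + θ * n) with hG
  have hbdd : BddAbove (Set.range G) := ⟨B, by
    rintro _ ⟨n, rfl⟩
    simpa only [hG, sub_sub] using (abs_le.1 (hθ n)).2⟩
  obtain ⟨_, ⟨n, rfl⟩, hn⟩ := exists_lt_of_lt_csSup (Set.range_nonempty G)
    (sub_lt_self (sSup (Set.range G)) hε)
  have hle : ∀ m, G m ≤ sSup (Set.range G) := fun m ↦ le_csSup hbdd ⟨m, rfl⟩
  obtain ⟨N, hN, hNK, hbal⟩ := hH.intCast_sub_affine (H 0) θ n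
  have hbal' : G (n + N) + G (n - N) - 2 * G n = 0 := hbal
  have hnear : |θ * N - (H (n + N) - H n : ℤ)| < ε := by
    have hdiff : θ * N - (H (n + N) - H n : ℤ) = G n - G (n + N) := by
      simp only [hG]; push_cast; ring
    rw [hdiff, abs_lt]
    constructor <;> linarith [hle (n + N), hle (n - N)]
  have hint := hgap N (Finset.mem_Icc.2 ⟨hN, hNK⟩) _ hnear
  refine ⟨((H (n + N) - H n : ℤ) : ℚ) / N, ?_⟩
  have hN' : (N : ℝ) ≠ 0 := by exact_mod_cast hN.ne'
  push_cast at hint ⊢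
  rw [eq_div_iff hN', hint]

end BalancedFunctions

section MechanicalFunctions

/-- Integer functions whose second differences are as small as those of a line of slope `P / Q`
rounded to integers: they lie in `{-1, 0, 1}`, vanish for radii divisible by `Q`, and around some
centre equal `-1` for all other radii. -/
structure IsMechanical (Q : ℕ) (H : ℤ → ℤ) : Prop where
  abs_secondDiff_le_one : ∀ n j, |secondDiff H n j| ≤ 1
  secondDiff_eq_zero : ∀ n j, (Q : ℤ) ∣ j → secondDiff H n j = 0
  exists_center : ∃ n, ∀ j, ¬ (Q : ℤ) ∣ j → secondDiff H n j = -1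

lemma eq_of_two_valued_of_reflections {S : Type*} {f : ℤ → S} {u v : S}
    (hf : ∀ i, f i = u ∨ f i = v)
    (hrefl : ∀ i, ∃ r : ℤ, 0 < r ∧ f (i + r) = f i ∧ f (i - r) = f i ∧
      ∀ t, 0 < t → t < r → f (i + t) ≠ f (i - t)) (i : ℤ) : f (i + 1) = f i := by
  by_contra hne
  obtain ⟨r, hr, hright, -, hflip⟩ := hrefl i
  obtain ⟨r', hr', -, hleft', hflip'⟩ := hrefl (i + 1)
  have hspread : ∀ t : ℕ, t < r → t < r' → f (i + 1 + t) = f (i + 1) ∧ f (i - t) = f i := by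
    intro t
    induction t with
    | zero => simp
    | succ t ih =>
      intro htr htr'
      push_cast at htr htr' ⊢
      obtain ⟨hright_t, hleft_t⟩ := ih (by omega) (by omega)
      have h := hflip (t + 1) (by omega) htr
      have h' := hflip' (t + 1) (by omega) htr'
      rw [show i + ((t : ℤ) + 1) = i + 1 + t by ring, hright_t] at h
      rw [show i + 1 - ((t : ℤ) + 1) = i - t by ring, hleft_t] at h'
      grind
  rcases le_or_gt r r' with hle | hlt
  · have h := (hspread (r - 1).toNat (by omega) (by omega)).1
    rw [show i + 1 + ((r - 1).toNat : ℤ) = i + r by omega, hright] at h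
    exact hne h.symm
  · have h := (hspread (r' - 1).toNat (by omega) (by omega)).2
    rw [show i - ((r' - 1).toNat : ℤ) = i + 1 - r' by omega, hleft'] at h
    exact hne h

variable {K : ℕ} {Q : ℤ} {W : ℤ → ℤ} {n₀ : ℤ}

lemma IsSignBalanced.sub_le_of_isMax (hQ : 0 < Q) (hW : IsSignBalanced K Q W)
    (hmax : ∀ x, W x ≤ W n₀) (x : ℤ) : W n₀ - Q ≤ W x := by
  suffices hreach : ∀ d : ℕ, ∀ n, W n = W n₀ → (x - n).natAbs ≤ d → W n₀ - Q ≤ W x from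
    hreach (x - n₀).natAbs n₀ rfl le_rfl
  intro d
  induction d with
  | zero =>
    intro n hn hxn
    obtain rfl : x = n := by omega
    omega
  | succ d ih =>
    intro n hn hxn
    obtain ⟨N, hN, -, hbal, δ, hδ, hdiff⟩ := hW n
    simp only [secondDiff] at hbal hdiff
    have hadd := hmax (n + N)
    have hsub := hmax (n - N)
    by_cases hfar : N ≤ (x - n).natAbs
    · rcases le_total n x with hnx | hxn'
      · exact ih (n + N) (by omega) (by omega)
      · exact ih (n - N) (by omega) (by omega)
    rcases eq_or_ne x n with rfl | hne
    · omega
    have hdiff' := hdiff (x - n).natAbs (by omega) (by omega)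
    have hadd' := hmax (n + (x - n).natAbs)
    have hsub' := hmax (n - (x - n).natAbs)
    rcases le_total n x with hnx | hxn'
    · rw [show n + ((x - n).natAbs : ℤ) = x by omega] at hdiff'
      omega
    · rw [show n - ((x - n).natAbs : ℤ) = x by omega] at hdiff'
      omega

lemma IsSignBalanced.eq_or_eq_sub_of_isMax (hQ : 0 < Q) (hW : IsSignBalanced K Q W)
    (hmax : ∀ x, W x ≤ W n₀) {x : ℤ} (hx : Q ∣ W x - W n₀) : W x = W n₀ ∨ W x = W n₀ - Q := by
  have hge := hW.sub_le_of_isMax hQ hmax x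
  rcases hge.eq_or_lt with h | hlt
  · exact .inr h.symm
  · have hlt' : |W x - W n₀| < Q := abs_lt.2 ⟨by omega, by linarith [hmax x]⟩
    exact .inl (sub_eq_zero.1 (Int.eq_zero_of_abs_lt_dvd hx hlt'))

lemma IsSignBalanced.eq_of_dvd_sub_isMax (hQ : 0 < Q) (hW : IsSignBalanced K Q W)
    (hdvd : ∀ x y, Q ∣ W x - W y ↔ Q ∣ x - y) (hmax : ∀ x, W x ≤ W n₀) {x : ℤ}
    (hx : Q ∣ x - n₀) : W x = W n₀ := by
  have htwo : ∀ i, W (n₀ + Q * i) = W n₀ ∨ W (n₀ + Q * i) = W n₀ - Q := fun i ↦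
    hW.eq_or_eq_sub_of_isMax hQ hmax ((hdvd _ _).2 ⟨i, by ring⟩)
  have hlow := hW.sub_le_of_isMax hQ hmax
  have hconst : ∀ i, W (n₀ + Q * (i + 1)) = W (n₀ + Q * i) := by
    refine eq_of_two_valued_of_reflections htwo fun i ↦ ?_
    obtain ⟨N, hN, -, hbal, δ, hδ, hdiff⟩ := hW (n₀ + Q * i)
    simp only [secondDiff] at hbal hdiff
    have hreturn : W (n₀ + Q * i + N) = W (n₀ + Q * i) ∧ W (n₀ + Q * i - N) = W (n₀ + Q * i) := by
      have := htwo i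
      have := hmax (n₀ + Q * i + N)
      have := hmax (n₀ + Q * i - N)
      have := hlow (n₀ + Q * i + N)
      have := hlow (n₀ + Q * i - N)
      omega
    obtain ⟨r, hr⟩ := (hdvd (n₀ + Q * i + N) (n₀ + Q * i)).1 (by rw [hreturn.1, sub_self]; simp)
    obtain rfl : N = Q * r := by linarith
    have hadd : ∀ t, n₀ + Q * (i + t) = n₀ + Q * i + Q * t := fun t ↦ by ring
    have hsub : ∀ t, n₀ + Q * (i - t) = n₀ + Q * i - Q * t := fun t ↦ by ring
    refine ⟨r, pos_of_mul_pos_right hN hQ.le, by rw [hadd, hreturn.1], by rw [hsub, hreturn.2],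
      fun t ht htr heq ↦ ?_⟩
    have h := hdiff (Q * t) (by positivity) (by gcongr)
    rw [← hadd, ← hsub, heq] at h
    have := htwo i
    have := htwo (i - t)
    omega
  obtain ⟨c, hc⟩ := hx
  have hall : ∀ i, W (n₀ + Q * i) = W n₀ := fun i ↦ by
    induction i using Int.induction_on with
    | zero => simp
    | succ i ih => rw [hconst, ih]
    | pred i ih => rw [← ih, ← hconst, sub_add_cancel]
  rw [← hall c, ← hc, add_sub_cancel]

lemma IsSignBalanced.sub_lt_of_isMax (hQ : 0 < Q) (hW : IsSignBalanced K Q W)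
    (hdvd : ∀ x y, Q ∣ W x - W y ↔ Q ∣ x - y) (hmax : ∀ x, W x ≤ W n₀) (x : ℤ) :
    W n₀ - Q < W x := by
  refine (hW.sub_le_of_isMax hQ hmax x).lt_of_ne fun h ↦ ?_
  have := hW.eq_of_dvd_sub_isMax hQ hdvd hmax ((hdvd x n₀).1 ⟨-1, by rw [← h]; ring⟩)
  omega

/-- `q.den` times the deviation of `H` from the line of slope `q`. -/
def slopeDefect (q : ℚ) (H : ℤ → ℤ) (n : ℤ) : ℤ := q.den * H n - q.num * n

lemma secondDiff_slopeDefect (q : ℚ) (H : ℤ → ℤ) (n j : ℤ) :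
    secondDiff (slopeDefect q H) n j = q.den * secondDiff H n j := by
  simp only [secondDiff, slopeDefect]
  ring

lemma den_dvd_slopeDefect_sub_iff (q : ℚ) (H : ℤ → ℤ) (x y : ℤ) :
    (q.den : ℤ) ∣ slopeDefect q H x - slopeDefect q H y ↔ (q.den : ℤ) ∣ x - y := by
  have hcop : IsCoprime (q.den : ℤ) q.num := by
    rw [Int.isCoprime_iff_gcd_eq_one, Int.gcd_comm]
    exact q.reduced
  have hsplit : slopeDefect q H x - slopeDefect q H y
      = q.den * (H x - H y) - q.num * (x - y) := by
    simp only [slopeDefect]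
    ring
  rw [hsplit, dvd_sub_right (dvd_mul_right _ _)]
  exact ⟨hcop.dvd_of_dvd_mul_left, fun h ↦ h.mul_left _⟩

lemma isSignBalanced_slopeDefect {H : ℤ → ℤ} (hH : IsSignBalanced K 1 H) (q : ℚ) :
    IsSignBalanced K q.den (slopeDefect q H) := fun n ↦ by
  obtain ⟨N, hN, hNK, hbal, δ, hδ, hdiff⟩ := hH n
  simp only [secondDiff_slopeDefect]
  refine ⟨N, hN, hNK, by rw [hbal, mul_zero], q.den * δ, ?_, fun j hj hjN ↦ by rw [hdiff j hj hjN]⟩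
  rcases hδ with rfl | rfl <;> simp

lemma exists_isMax_slopeDefect {q : ℚ} {H : ℤ → ℤ} {B : ℝ}
    (hB : ∀ n : ℤ, |(H n : ℝ) - H 0 - q * n| ≤ B) :
    ∃ n₀, ∀ n, slopeDefect q H n ≤ slopeDefect q H n₀ := by
  have hbound : ∀ n, slopeDefect q H n ≤ ⌈(q.den * (H 0 + B) : ℝ)⌉ := fun n ↦ by
    have hq : (q.den : ℝ) * q = q.num := by exact_mod_cast Rat.den_mul_eq_num q
    have h := mul_le_mul_of_nonneg_left (abs_le.1 (hB n)).2 (Nat.cast_nonneg (α := ℝ) q.den)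
    have hle : (slopeDefect q H n : ℝ) ≤ q.den * (H 0 + B) := by
      rw [slopeDefect]
      push_cast
      linear_combination h + n * hq
    exact_mod_cast hle.trans (Int.le_ceil _)
  obtain ⟨_, ⟨n₀, rfl⟩, hmax⟩ := Int.exists_greatest_of_bdd
    (P := fun z ↦ ∃ n, slopeDefect q H n = z) ⟨_, by rintro _ ⟨n, rfl⟩; exact hbound n⟩ ⟨_, 0, rfl⟩
  exact ⟨n₀, fun n ↦ hmax _ ⟨n, rfl⟩⟩

/-- By the rigidity of two-valued functions the slope defect attains its maximum on a full residue
class modulo the denominator of the slope, and is therefore periodic. -/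
theorem IsSignBalanced.exists_isMechanical {H : ℤ → ℤ} (hH : IsSignBalanced K 1 H)
    (hstep : ∀ n, |H (n + 1) - H n| ≤ 1) : ∃ Q : ℕ, 0 < Q ∧ IsMechanical Q H := by
  obtain ⟨θ, hθ⟩ := hH.isBalanced.exists_slope hstep
  obtain ⟨q, rfl⟩ := hH.isBalanced.exists_rat_eq_slope hθ
  obtain ⟨n₀, hmax⟩ := exists_isMax_slopeDefect hθ
  have hQ : (0 : ℤ) < q.den := by exact_mod_cast q.den_pos
  have hdvd := den_dvd_slopeDefect_sub_iff q H
  have hlow := (isSignBalanced_slopeDefect hH q).sub_lt_of_isMax hQ hdvd hmax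
  have hper : ∀ x y, (q.den : ℤ) ∣ x - y → slopeDefect q H x = slopeDefect q H y := fun x y hxy ↦
    sub_eq_zero.1 (Int.eq_zero_of_abs_lt_dvd ((hdvd x y).2 hxy)
      (abs_lt.2 ⟨by linarith [hlow x, hmax y], by linarith [hlow y, hmax x]⟩))
  have hdiff : ∀ n j, slopeDefect q H (n + j) + slopeDefect q H (n - j) - 2 * slopeDefect q H n
      = q.den * secondDiff H n j := secondDiff_slopeDefect q H
  refine ⟨q.den, q.den_pos, ⟨fun n j ↦ ?_, fun n j hj ↦ ?_, n₀, fun j hj ↦ ?_⟩⟩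
  · have hlt : |q.den * secondDiff H n j| < q.den * 2 := by
      rw [← hdiff, abs_lt]
      constructor <;> linarith [hlow n, hlow (n + j), hlow (n - j), hmax n, hmax (n + j),
        hmax (n - j)]
    rw [abs_mul, abs_of_pos hQ] at hlt
    linarith [lt_of_mul_lt_mul_left hlt hQ.le]
  · have h := hdiff n j
    rw [hper (n + j) n (by simpa using hj), hper (n - j) n (by simpa using hj)] at h
    exact (mul_eq_zero.1 (by linarith : q.den * secondDiff H n j = 0)).resolve_left hQ.ne'
  · have hne : slopeDefect q H (n₀ + j) ≠ slopeDefect q H n₀ := fun h ↦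
      hj (by simpa using (hdvd (n₀ + j) n₀).1 (by simp [h]))
    have hlt : slopeDefect q H (n₀ + j) < slopeDefect q H n₀ := (hmax _).lt_of_ne hne
    have hneg : q.den * secondDiff H n₀ j < q.den * 0 := by
      linarith [hdiff n₀ j, hmax (n₀ - j)]
    have hgt : q.den * (-2) < q.den * secondDiff H n₀ j := by
      linarith [hdiff n₀ j, hlow (n₀ + j), hlow (n₀ - j)]
    have := lt_of_mul_lt_mul_left hneg hQ.le
    have := lt_of_mul_lt_mul_left hgt hQ.le
    omega

end MechanicalFunctions

/-! ### Admissible sequences -/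

section AdmissibleSequences

/-- The sum of the two entries of `x` at distance `k` from `n`, twisted by the sign of the
conjugate `-1 / α` of `α`; the twist makes it compatible with `IsCarryRecurrence`. -/
def twistedSum {R : Type*} [Ring R] (x : ℤ → R) (n : ℤ) (k : ℕ) : R :=
  x (n + k) + (-1) ^ k * x (n - k)

/-- The correlation of `a` at distance `k` around `n`, with the twist of `twistedSum`. -/
def twistedCorr (a : ℤ → ℤ) (n : ℤ) (k : ℕ) : ℤ := a n * twistedSum a n k

/-- `d 1, d 2, …` is lexicographically smaller than `0, -1, 0, 0, …`, and if the two sequences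
agree in the first two places, then they differ at some place up to `K₀`. -/
structure IsLexBelow (K₀ : ℕ) (d : ℕ → ℤ) : Prop where
  one_le : d 1 ≤ 0
  two_le : d 1 = 0 → d 2 ≤ -1
  exists_neg : d 1 = 0 → d 2 = -1 → ∃ K, 3 ≤ K ∧ K ≤ K₀ ∧ d K < 0 ∧ ∀ j, 3 ≤ j → j < K → d j = 0

/-- Sequences over `{-1, 0, 1}` obeying the lexicographic constraints that a small value of
`limsup ‖ξ αⁿ‖` forces on the carries of `ξ αⁿ`. -/
structure IsAdmissible (K₀ : ℕ) (a : ℤ → ℤ) : Prop where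
  abs_le_one : ∀ n, |a n| ≤ 1
  isLexBelow : ∀ n, a n ≠ 0 → IsLexBelow K₀ (twistedCorr a n)

/-- The reflection that preserves `twistedCorr`. -/
def twistedReflection (a : ℤ → ℤ) (n : ℤ) : ℤ := n.negOnePow * a (-n)

lemma twistedReflection_ne_zero_iff {a : ℤ → ℤ} {n : ℤ} :
    twistedReflection a n ≠ 0 ↔ a (-n) ≠ 0 := by
  simp [twistedReflection]

lemma twistedCorr_twistedReflection (a : ℤ → ℤ) (n : ℤ) (k : ℕ) :
    twistedCorr (twistedReflection a) n k = twistedCorr a (-n) k := by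
  have hn : (n.negOnePow : ℤ) * n.negOnePow = 1 := by
    rw [← Units.val_mul, Int.units_mul_self, Units.val_one]
  have hk : ((-1 : ℤ) ^ k) * (-1) ^ k = 1 := by rw [← mul_pow]; simp
  simp only [twistedCorr, twistedSum, twistedReflection, Int.negOnePow_add, Int.negOnePow_sub,
    Units.val_mul, Int.coe_negOnePow_natCast]
  rw [show -(n + k : ℤ) = -n - k by ring, show -(n - k : ℤ) = -n + k by ring]
  linear_combination (a (-n) * ((-1) ^ k * a (-n - k) + a (-n + k) * ((-1) ^ k * (-1) ^ k))) * hn +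
    a (-n) * a (-n + k) * hk

lemma IsAdmissible.twistedReflection {K₀ : ℕ} {a : ℤ → ℤ} (ha : IsAdmissible K₀ a) :
    IsAdmissible K₀ (twistedReflection a) where
  abs_le_one n := by
    simpa [MarkoffLagrange.twistedReflection, abs_mul, Int.abs_negOnePow] using ha.abs_le_one (-n)
  isLexBelow n hn := by
    rw [funext (twistedCorr_twistedReflection a n)]
    exact ha.isLexBelow (-n) (twistedReflection_ne_zero_iff.1 hn)

variable {K₀ : ℕ} {a : ℤ → ℤ} {n m : ℤ}

lemma IsAdmissible.eq_one_or_eq_neg_one (ha : IsAdmissible K₀ a) (hn : a n ≠ 0) :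
    a n = 1 ∨ a n = -1 := by
  have := abs_le.1 (ha.abs_le_one n)
  omega

lemma IsAdmissible.succ_ne_self (ha : IsAdmissible K₀ a) (hn : a n ≠ 0) : a (n + 1) ≠ a n := by
  have hpred : ∀ m, a m ≠ 0 → a (m + 1) = a m → a (m - 1) = a m := fun m hm hm1 ↦ by
    have hle := (ha.isLexBelow m hm).one_le
    simp only [twistedCorr, twistedSum, Nat.cast_one, pow_one, hm1] at hle
    have := abs_le.1 (ha.abs_le_one (m - 1))
    rcases ha.eq_one_or_eq_neg_one hm with h | h <;> rw [h] at hle ⊢ <;> omega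
  intro h1
  have hm1 := hpred n hn h1
  have hm2 := hpred (n - 1) (by rwa [hm1]) (by rw [sub_add_cancel, hm1])
  rw [hm1, sub_sub, one_add_one_eq_two] at hm2
  have hle := (ha.isLexBelow n hn).two_le (by simp [twistedCorr, twistedSum, h1, hm1])
  simp only [twistedCorr, twistedSum, Nat.cast_ofNat, hm2] at hle
  have := abs_le.1 (ha.abs_le_one (n + 2))
  rcases ha.eq_one_or_eq_neg_one hn with h | h <;> rw [h] at hle <;> omega

lemma IsAdmissible.mul_self_eq_one (ha : IsAdmissible K₀ a) (hn : a n ≠ 0) : a n * a n = 1 := by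
  rcases ha.eq_one_or_eq_neg_one hn with h | h <;> simp [h]

lemma IsAdmissible.mul_add_two_add_sub_two_le (ha : IsAdmissible K₀ a) (hn : a n ≠ 0)
    (hadd : a (n + 1) = 0) (hsub : a (n - 1) = 0) : a n * (a (n + 2) + a (n - 2)) ≤ -1 := by
  simpa [twistedCorr, twistedSum] using
    (ha.isLexBelow n hn).two_le (by simp [twistedCorr, twistedSum, hadd, hsub])

lemma IsAdmissible.add_two_ne_self (ha : IsAdmissible K₀ a) (hn : a n ≠ 0)
    (hadd : a (n + 1) = 0) (hsub : a (n - 1) = 0) : a (n + 2) ≠ a n := by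
  intro h2
  have hle := ha.mul_add_two_add_sub_two_le hn hadd hsub
  have := abs_le.1 (ha.abs_le_one (n - 2))
  rcases ha.eq_one_or_eq_neg_one hn with h | h <;> rw [h2, h] at hle <;> omega

lemma IsAdmissible.sub_two_eq_neg (ha : IsAdmissible K₀ a) (hn : a n ≠ 0)
    (hadd : a (n + 1) = 0) (hsub : a (n - 1) = 0) (hadd2 : a (n + 2) = 0) :
    a (n - 2) = -a n := by
  have hle := ha.mul_add_two_add_sub_two_le hn hadd hsub
  have := abs_le.1 (ha.abs_le_one (n - 2))
  rcases ha.eq_one_or_eq_neg_one hn with h | h <;> rw [hadd2, h] at hle <;> omega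

/-- `n < m` are consecutive elements of the support of `a`. -/
structure IsConsecutive (a : ℤ → ℤ) (n m : ℤ) : Prop where
  lt : n < m
  left_ne_zero : a n ≠ 0
  right_ne_zero : a m ≠ 0
  eq_zero_between : ∀ j, n < j → j < m → a j = 0

lemma IsConsecutive.twistedReflection (h : IsConsecutive a n m) :
    IsConsecutive (twistedReflection a) (-m) (-n) where
  lt := neg_lt_neg h.lt
  left_ne_zero := twistedReflection_ne_zero_iff.2 (by rw [neg_neg]; exact h.right_ne_zero)
  right_ne_zero := twistedReflection_ne_zero_iff.2 (by rw [neg_neg]; exact h.left_ne_zero)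
  eq_zero_between j hmj hjn := by
    rw [MarkoffLagrange.twistedReflection, h.eq_zero_between (-j) (by omega) (by omega), mul_zero]

/-- If the next entry of the support to the right of `n` had the same sign, then the lexicographic
condition at `n` would force the two entries of the support next to `n` on the left to be
`a (n - 2) = -a n` and `a (n - k) = a n` with `k` even, making the twisted correlation at distance
`k` positive. -/
lemma IsAdmissible.ne_of_isConsecutive (ha : IsAdmissible K₀ a)
    (ih : ∀ l k, k - l < m - n → IsConsecutive a l k → Even (k - l) ∧ a k = -a l)
    (h : IsConsecutive a n m) : a m ≠ a n := by
  intro hmn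
  obtain ⟨d, rfl⟩ : ∃ d : ℕ, m = n + d := ⟨(m - n).toNat, by have := h.lt; omega⟩
  obtain ⟨hpos, hn, -, hbetween⟩ := h
  have hadd : ∀ j : ℕ, 0 < j → j < d → a (n + j) = 0 := fun j hj hjd ↦
    hbetween _ (by omega) (by omega)
  have hd1 : d ≠ 1 := by rintro rfl; exact ha.succ_ne_self hn hmn
  have hadd1 : a (n + 1) = 0 := hadd 1 one_pos (by omega)
  have hsub1 : a (n - 1) = 0 := by
    by_contra hne
    simpa using (ih (n - 1) n (by omega) ⟨by omega, hne, hn, by omega⟩).1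
  have hd2 : d ≠ 2 := by rintro rfl; exact ha.add_two_ne_self hn hadd1 hsub1 hmn
  have hadd2 : a (n + 2) = 0 := hadd 2 two_pos (by omega)
  have hsub2 := ha.sub_two_eq_neg hn hadd1 hsub1 hadd2
  have hsq := ha.mul_self_eq_one hn
  obtain ⟨K, hK, -, hKneg, hKzero⟩ := (ha.isLexBelow n hn).exists_neg
    (by simp [twistedCorr, twistedSum, hadd1, hsub1])
    (by simp [twistedCorr, twistedSum, hadd2, hsub2, hsq])
  set k := min K d with hk
  have hsub : ∀ j : ℕ, 3 ≤ j → j < k → a (n - j) = 0 := fun j hj hjk ↦ by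
    simpa [twistedCorr, twistedSum, hn, hadd j (by omega) (by omega)] using hKzero j hj (by omega)
  have hcorr : a n * ((-1) ^ k * a (n - k)) < 0 := by
    rcases le_or_gt d K with hdK | hKd
    · have hle : twistedCorr a n d ≤ 0 := hdK.eq_or_lt.elim (fun h ↦ h ▸ hKneg.le)
        fun h ↦ (hKzero d (by omega) h).le
      rw [twistedCorr, twistedSum, hmn, mul_add, hsq] at hle
      rw [hk, min_eq_right hdK]
      omega
    · rw [hk, min_eq_left hKd.le]
      simpa [twistedCorr, twistedSum, hadd K (by omega) hKd] using hKneg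
  have hsubk : a (n - k) ≠ 0 := fun h ↦ by simp [h] at hcorr
  obtain ⟨heven, hneg⟩ := ih (n - k) (n - 2) (by omega) ⟨by omega, hsubk, by simpa [hsub2] using hn,
    fun j hj hj' ↦ by
      simpa only [show n - ((n - j).toNat : ℤ) = j by omega] using
        hsub (n - j).toNat (by omega) (by omega)⟩
  have hkeven : Even k := by
    rw [Int.even_iff] at heven
    rw [Nat.even_iff]
    omega
  rw [hkeven.neg_one_pow, one_mul, ← neg_neg (a (n - k)), ← hneg, hsub2, neg_neg, hsq] at hcorr
  exact absurd hcorr (by norm_num)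

/-- Reflection turns a pair of opposite signs at an odd distance into a pair of equal signs. -/
theorem IsAdmissible.even_sub_and_eq_neg (ha : IsAdmissible K₀ a) (h : IsConsecutive a n m) :
    Even (m - n) ∧ a m = -a n := by
  induction hd : (m - n).toNat using Nat.strong_induction_on generalizing a n m with
  | _ d ih =>
  have ih' : ∀ {a' : ℤ → ℤ}, IsAdmissible K₀ a' → ∀ l k, k - l < m - n → IsConsecutive a' l k →
      Even (k - l) ∧ a' k = -a' l := fun ha' l k hlk h' ↦
    ih (k - l).toNat (by have := h.lt; have := h'.lt; omega) ha' h' rfl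
  have hneg : a m = -a n := by
    have := ha.ne_of_isConsecutive (ih' ha) h
    have := ha.eq_one_or_eq_neg_one h.left_ne_zero
    have := ha.eq_one_or_eq_neg_one h.right_ne_zero
    omega
  refine ⟨?_, hneg⟩
  by_contra hodd
  refine ha.twistedReflection.ne_of_isConsecutive (m := -n) (n := -m)
    (fun l k hlk ↦ ih' ha.twistedReflection l k (by omega)) h.twistedReflection ?_
  have hsign : m.negOnePow = -n.negOnePow := by
    rw [← sub_add_cancel m n, Int.negOnePow_add,
      Int.negOnePow_odd _ (Int.not_even_iff_odd.1 hodd), neg_one_mul]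
  simp [MarkoffLagrange.twistedReflection, hneg, hsign]

lemma IsAdmissible.even_sub (ha : IsAdmissible K₀ a) (hn : a n ≠ 0) (hm : a m ≠ 0) :
    Even (m - n) := by
  wlog hnm : n ≤ m generalizing n m
  · simpa using (this hm hn (by omega)).neg
  induction hd : (m - n).toNat using Nat.strong_induction_on generalizing n m with
  | _ d ih =>
  rcases hnm.eq_or_lt with rfl | hlt
  · simp
  by_cases hbetween : ∀ j, n < j → j < m → a j = 0
  · exact (ha.even_sub_and_eq_neg ⟨hlt, hn, hm, hbetween⟩).1
  push Not at hbetween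
  obtain ⟨j, hnj, hjm, hj⟩ := hbetween
  have hmj := ih (m - j).toNat (by omega) hj hm hjm.le rfl
  have hjn := ih (j - n).toNat (by omega) hn hj hnj.le rfl
  simpa using hmj.add hjn

lemma IsConsecutive.comp_two_mul (hodd : ∀ i, a (2 * i + 1) = 0)
    (h : IsConsecutive (fun i ↦ a (2 * i)) n m) : IsConsecutive a (2 * n) (2 * m) where
  lt := by have := h.lt; omega
  left_ne_zero := h.left_ne_zero
  right_ne_zero := h.right_ne_zero
  eq_zero_between j hnj hjm := by
    rcases Int.even_or_odd' j with ⟨i, rfl | rfl⟩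
    · exact h.eq_zero_between i (by omega) (by omega)
    · exact hodd i

end AdmissibleSequences

section Antidifferences

lemma exists_antidifference {A : Type*} [AddCommGroup A] (c : ℤ → A) :
    ∃ s : ℤ → A, s 0 = 0 ∧ ∀ i, s i - s (i - 1) = c i := by
  refine ⟨fun n ↦ ∑ j ∈ Finset.range n.toNat, c (j + 1) - ∑ j ∈ Finset.range (-n).toNat, c (-j),
    by simp, fun i ↦ ?_⟩
  rcases lt_or_ge 0 i with hi | hi
  · obtain ⟨k, rfl⟩ : ∃ k : ℕ, i = k + 1 := ⟨(i - 1).toNat, by omega⟩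
    simp only [add_sub_cancel_right, show ((k : ℤ) + 1).toNat = k + 1 by omega, Int.toNat_natCast,
      show (-((k : ℤ) + 1)).toNat = 0 by omega, show (-(k : ℤ)).toNat = 0 by omega,
      Finset.sum_range_succ, Finset.sum_range_zero]
    abel
  · obtain ⟨k, rfl⟩ : ∃ k : ℕ, i = -k := ⟨(-i).toNat, by omega⟩
    simp only [show (-(k : ℤ)).toNat = 0 by omega, show (-(k : ℤ) - 1).toNat = 0 by omega,
      show (- -(k : ℤ)).toNat = k by omega, show (-(-(k : ℤ) - 1)).toNat = k + 1 by omega,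
      Finset.sum_range_succ, Finset.sum_range_zero]
    abel

variable {c s : ℤ → ℤ} {n m : ℤ}

lemma antidifference_eq_or_eq_add (hs : ∀ i, s i - s (i - 1) = c i)
    (halt : ∀ l k, IsConsecutive c l k → c k = -c l) (hn : c n ≠ 0) (hnm : n ≤ m) :
    s m = s (n - 1) ∨ s m = s (n - 1) + c n := by
  -- The sum is read off the last nonzero entry, as the signs alternate.
  suffices hlast : ∃ l ≤ m, c l ≠ 0 ∧ (∀ j, l < j → j ≤ m → c j = 0) ∧
      (s m = s (n - 1) + c n ∧ c l = c n ∨ s m = s (n - 1) ∧ c l = -c n) by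
    obtain ⟨l, -, -, -, h | h⟩ := hlast
    exacts [.inr h.1, .inl h.1]
  induction m, hnm using Int.leInduction with
  | base => exact ⟨n, le_rfl, hn, by omega, .inl ⟨by linarith [hs n], rfl⟩⟩
  | succ m _ ih =>
    obtain ⟨l, hlm, hl, hzero, hsum⟩ := ih
    have hstep := hs (m + 1)
    rw [add_sub_cancel_right] at hstep
    by_cases hm : c (m + 1) = 0
    · refine ⟨l, by omega, hl, fun j hlj hjm ↦ ?_, by rwa [sub_eq_zero.1 (hstep.trans hm)]⟩
      rcases hjm.eq_or_lt with rfl | hlt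
      exacts [hm, hzero j hlj (by omega)]
    · have := halt l (m + 1) ⟨by omega, hl, hm, fun j hlj hjm ↦ hzero j hlj (by omega)⟩
      exact ⟨m + 1, le_rfl, hm, by omega, by omega⟩

lemma abs_antidifference_sub_le_one (hs : ∀ i, s i - s (i - 1) = c i) (hc : ∀ i, |c i| ≤ 1)
    (halt : ∀ l k, IsConsecutive c l k → c k = -c l) (m n : ℤ) : |s m - s n| ≤ 1 := by
  wlog hnm : n ≤ m generalizing m n
  · rw [abs_sub_comm]
    exact this n m (by omega)
  induction n, hnm using Int.leInductionDown with
  | base => simp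
  | pred n hnm ih =>
    by_cases hn : c n = 0
    · rwa [← sub_eq_zero.1 ((hs n).trans hn)]
    · rcases antidifference_eq_or_eq_add hs halt hn hnm with h | h <;> rw [h]
      · simp
      · simpa using hc n

lemma secondDiff_add_one {H : ℤ → ℤ} (hH : ∀ i, H i - H (i - 1) = s (i - 1)) (n j : ℤ) :
    secondDiff H n (j + 1) = secondDiff H n j + (s (n + j) - s (n - 1 - j)) := by
  have hright := hH (n + j + 1)
  have hleft := hH (n - j)
  rw [add_sub_cancel_right] at hright
  rw [show n - 1 - j = n - j - 1 by ring, ← hright, ← hleft, secondDiff, secondDiff,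
    show n + (j + 1) = n + j + 1 by ring, show n - (j + 1) = n - j - 1 by ring]
  ring

lemma exists_first_eq_neg_one {K₀ : ℕ} {D P : ℕ → ℤ} (hP0 : P 0 = 1)
    (hPD : ∀ j, P (j + 1) = P j + D (j + 1)) (hP : ∀ j, |P j| ≤ 1) (hD1 : D 1 ≤ -1)
    (hD : D 1 = -1 → ∃ k, 2 ≤ k ∧ k ≤ K₀ ∧ D k < 0 ∧ ∀ j, 2 ≤ j → j < k → D j = 0) :
    ∃ k, 0 < k ∧ k ≤ K₀ + 1 ∧ P k = -1 ∧ ∀ j, 0 < j → j < k → P j = 0 := by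
  have hP1 := hPD 0
  rw [zero_add, hP0] at hP1
  by_cases hD1' : D 1 = -1
  · obtain ⟨k, hk, hkK, hneg, hzero⟩ := hD hD1'
    have hPzero : ∀ j, 0 < j → j < k → P j = 0 := fun j hj ↦ by
      induction j, hj using Nat.le_induction with
      | base => intro _; rw [hP1, hD1', add_neg_cancel]
      | succ j hj ih => intro hjk; rw [hPD, ih (by omega), hzero _ (by omega) hjk, add_zero]
    have hPk := hPD (k - 1)
    rw [hPzero (k - 1) (by omega) (by omega), show k - 1 + 1 = k by omega] at hPk
    have := abs_le.1 (hP k)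
    exact ⟨k, by omega, by omega, by omega, hPzero⟩
  · have := abs_le.1 (hP 1)
    exact ⟨1, one_pos, by omega, by omega, by omega⟩

lemma exists_secondDiff_eq_zero {H : ℤ → ℤ} {k : ℕ} (hH : ∀ i, H i - H (i - 1) = s (i - 1))
    (hs : ∀ i, s i - s (i - 1) = c i) (hk : 0 < k) (hsk : s (n + k) - s (n - 1 - k) = -c n)
    (hsj : ∀ j : ℕ, 0 < j → j < k → s (n + j) - s (n - 1 - j) = 0) :
    secondDiff H n (k + 1) = 0 ∧ ∀ j : ℤ, 0 < j → j < k + 1 → secondDiff H n j = c n := by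
  have hconst : ∀ j : ℕ, 0 < j → j ≤ k → secondDiff H n j = c n := fun j hj ↦ by
    induction j, hj using Nat.le_induction with
    | base =>
      intro _
      have h1 := secondDiff_add_one hH n 0
      have h0 : secondDiff H n 0 = 0 := by simp [secondDiff, two_mul]
      rw [zero_add, h0, zero_add, add_zero, sub_zero, hs] at h1
      exact_mod_cast h1
    | succ j hj ih =>
      intro hjk
      push_cast
      rw [secondDiff_add_one hH, ih (by omega), hsj j hj (by omega), add_zero]
  refine ⟨by rw [secondDiff_add_one hH, hconst k hk le_rfl, hsk, add_neg_cancel],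
    fun j hj hjk ↦ ?_⟩
  simpa only [Int.toNat_of_nonneg hj.le] using hconst j.toNat (by omega) (by omega)

end Antidifferences

section SecondAntidifference

variable {K₀ : ℕ} {a : ℤ → ℤ}

lemma twistedCorr_two_mul (a : ℤ → ℤ) (n : ℤ) (k : ℕ) : twistedCorr a (2 * n) (2 * k)
    = a (2 * n) * (a (2 * (n + k)) + a (2 * (n - k))) := by
  rw [twistedCorr, twistedSum, (even_two_mul k).neg_one_pow, one_mul, mul_add 2, mul_sub 2]
  push_cast
  rfl

lemma twistedCorr_odd_eq_zero (hodd : ∀ i, a (2 * i + 1) = 0) (n : ℤ) (k : ℕ) :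
    twistedCorr a (2 * n) (2 * k + 1) = 0 := by
  have hadd := hodd (n + k)
  have hsub := hodd (n - k - 1)
  rw [show 2 * (n + k) + 1 = 2 * n + ((2 * k + 1 : ℕ) : ℤ) by push_cast; ring] at hadd
  rw [show 2 * (n - k - 1) + 1 = 2 * n - ((2 * k + 1 : ℕ) : ℤ) by push_cast; ring] at hsub
  rw [twistedCorr, twistedSum, hadd, hsub, mul_zero, add_zero, mul_zero]

lemma IsAdmissible.exists_twistedCorr_two_mul_neg (ha : IsAdmissible K₀ a)
    (hodd : ∀ i, a (2 * i + 1) = 0) {n : ℤ} (hn : a (2 * n) ≠ 0)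
    (h2 : twistedCorr a (2 * n) 2 = -1) :
    ∃ k, 2 ≤ k ∧ k ≤ K₀ ∧ twistedCorr a (2 * n) (2 * k) < 0 ∧
      ∀ j, 2 ≤ j → j < k → twistedCorr a (2 * n) (2 * j) = 0 := by
  obtain ⟨K, hK, hK₀, hneg, hzero⟩ := (ha.isLexBelow _ hn).exists_neg
    (twistedCorr_odd_eq_zero hodd n 0) h2
  rcases Nat.even_or_odd' K with ⟨k, rfl | rfl⟩
  · exact ⟨k, by omega, by omega, hneg, fun j hj hjk ↦ hzero _ (by omega) (by omega)⟩
  · exact absurd (twistedCorr_odd_eq_zero hodd n k) hneg.ne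

theorem IsAdmissible.exists_isSignBalanced (ha : IsAdmissible K₀ a)
    (hodd : ∀ i, a (2 * i + 1) = 0) :
    ∃ H : ℤ → ℤ, (∀ n, |H (n + 1) - H n| ≤ 1) ∧ (∀ i, secondDiff H i 1 = a (2 * i)) ∧
      IsSignBalanced (K₀ + 2) 1 H := by
  obtain ⟨s, hs0, hs⟩ := exists_antidifference fun i ↦ a (2 * i)
  obtain ⟨H, -, hH⟩ := exists_antidifference fun i ↦ s (i - 1)
  have hosc : ∀ m n, |s m - s n| ≤ 1 := abs_antidifference_sub_le_one hs
    (fun i ↦ ha.abs_le_one _) fun l k h ↦ (ha.even_sub_and_eq_neg (h.comp_two_mul hodd)).2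
  have hstep : ∀ n, |H (n + 1) - H n| ≤ 1 := fun n ↦ by
    have hHn := hH (n + 1)
    rw [add_sub_cancel_right] at hHn
    simpa only [hHn, hs0, sub_zero] using hosc n 0
  have hH1 : ∀ i, secondDiff H i 1 = a (2 * i) := fun i ↦ by
    simpa [secondDiff, two_mul, hs] using secondDiff_add_one hH i 0
  refine ⟨H, hstep, hH1, fun n ↦ ?_⟩
  by_cases hn : a (2 * n) = 0
  · exact ⟨1, one_pos, by omega, (hH1 n).trans hn, 1, .inl rfl, by omega⟩
  have hsucc (j : ℕ) : a (2 * n) * (s (n + (j + 1 : ℕ)) - s (n - 1 - (j + 1 : ℕ))) =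
      a (2 * n) * (s (n + j) - s (n - 1 - j)) + twistedCorr a (2 * n) (2 * (j + 1)) := by
    rw [twistedCorr_two_mul, ← hs (n + (j + 1 : ℕ)), ← hs (n - (j + 1 : ℕ)),
      show n + ↑(j + 1) - 1 = n + j by push_cast; ring,
      show n - ↑(j + 1) = n - 1 - j by push_cast; ring,
      show n - 1 - ↑(j + 1) = n - 1 - j - 1 by push_cast; ring]
    ring
  obtain ⟨k, hk, hkK, hlast, hzero⟩ := exists_first_eq_neg_one (K₀ := K₀)
    (P := fun j ↦ a (2 * n) * (s (n + j) - s (n - 1 - j)))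
    (D := fun j ↦ twistedCorr a (2 * n) (2 * j)) (by simpa [hs] using ha.mul_self_eq_one hn) hsucc
    (fun j ↦ by
      rcases ha.eq_one_or_eq_neg_one hn with h | h <;> simpa [h, abs_sub_comm] using hosc _ _)
    ((ha.isLexBelow _ hn).two_le (twistedCorr_odd_eq_zero hodd n 0))
    (ha.exists_twistedCorr_two_mul_neg hodd hn)
  obtain ⟨hbal, hconst⟩ := exists_secondDiff_eq_zero hH hs hk (n := n)
    (by rcases ha.eq_one_or_eq_neg_one hn with h | h <;> rw [h] at hlast ⊢ <;> omega)
    fun j hj hjk ↦ by simpa [hn] using hzero j hj hjk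
  exact ⟨k + 1, by omega, by push_cast; omega, hbal, _, ha.eq_one_or_eq_neg_one hn, hconst⟩

end SecondAntidifference

/-! ### Lexicographic constraints from a bound -/

section LexFromBound

variable {α η : ℝ} {K₀ : ℕ} {h : ℕ → ℝ} {d : ℕ → ℤ}

lemma eq_pow_mul_of_digits_eq_zero (hrec : ∀ k, h (k + 1) = α * h k - d (k + 1)) {N m : ℕ}
    (hd : ∀ j, N < j → j ≤ N + m → d j = 0) : h (N + m) = α ^ m * h N := by
  induction m with
  | zero => simp
  | succ m ih =>
    rw [← add_assoc, hrec, ih fun j hj hjm ↦ hd j hj (by omega), hd _ (by omega) (by omega)]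
    push_cast
    ring

lemma digit_nonpos (hα : 0 < α) (hh : ∀ k, -1 < h k)
    (hrec : ∀ k, h (k + 1) = α * h k - d (k + 1)) {k : ℕ} (hk : h k < 0) : d (k + 1) ≤ 0 := by
  have : (d (k + 1) : ℝ) < 1 := by linarith [hh (k + 1), hrec k, mul_neg_of_pos_of_neg hα hk]
  exact Int.lt_add_one_iff.1 (by exact_mod_cast this)

lemma exists_first_digit_neg (hα : 0 < α) (hη : 0 < η) (hh : ∀ k, -1 < h k)
    (hrec : ∀ k, h (k + 1) = α * h k - d (k + 1)) {N : ℕ} (hN : h N ≤ -(α ^ N * η))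
    (hNK : N ≤ K₀) (hK : 1 ≤ α ^ K₀ * η) :
    ∃ K, N < K ∧ K ≤ K₀ ∧ d K < 0 ∧ ∀ j, N < j → j < K → d j = 0 := by
  have hex : ∃ K, N < K ∧ K ≤ K₀ ∧ d K ≠ 0 := by
    by_contra! hzero
    obtain ⟨m, rfl⟩ := Nat.exists_eq_add_of_le hNK
    have hlast := eq_pow_mul_of_digits_eq_zero hrec hzero
    have := mul_le_mul_of_nonneg_left hN (pow_nonneg hα.le m)
    rw [pow_add] at hK
    linarith [hh (N + m)]
  classical
  obtain ⟨hNK, hKK₀, hdK⟩ := Nat.find_spec hex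
  set K := Nat.find hex
  have hzero : ∀ j, N < j → j < K → d j = 0 := fun j hj hjK ↦ by
    simpa [hj, hjK.le.trans hKK₀] using Nat.find_min hex hjK
  obtain ⟨m, hm⟩ := Nat.exists_eq_add_of_le (Nat.succ_le_of_lt hNK)
  have hprev := eq_pow_mul_of_digits_eq_zero (m := m) hrec fun j hj hjm ↦ hzero j hj (by omega)
  have hneg : h (N + m) < 0 := by
    rw [hprev]
    exact mul_neg_of_pos_of_neg (by positivity) (hN.trans_lt (neg_lt_zero.2 (by positivity)))
  have hle := digit_nonpos hα hh hrec hneg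
  rw [show N + m + 1 = K by omega] at hle
  exact ⟨K, hNK, hKK₀, hle.lt_of_ne hdK, hzero⟩

lemma isLexBelow_of_neg_one_lt (hα : 0 < α) (hη : 0 < η) (hh : ∀ k, -1 < h k)
    (hrec : ∀ k, h (k + 1) = α * h k - d (k + 1)) (h0 : α ^ 2 * h 0 ≤ -1 - α ^ 2 * η)
    (hK₀ : 2 ≤ K₀) (hK : 1 ≤ α ^ K₀ * η) : IsLexBelow K₀ d := by
  have hαη : 0 < α ^ 2 * η := by positivity
  have h0neg : h 0 < 0 := neg_of_mul_neg_right (by linarith : α ^ 2 * h 0 < 0) (by positivity)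
  have h2 : d 1 = 0 → h 2 = α ^ 2 * h 0 - d 2 := fun hd1 ↦ by
    rw [hrec 1, hrec 0, zero_add, hd1, Int.cast_zero]
    ring
  refine ⟨digit_nonpos hα hh hrec h0neg, fun hd1 ↦ ?_, fun hd1 hd2 ↦ ?_⟩
  · have : (d 2 : ℝ) < 0 := by linarith [hh 2, h2 hd1]
    exact Int.le_sub_one_iff.2 (by exact_mod_cast this)
  · refine exists_first_digit_neg hα hη hh hrec ?_ hK₀ hK
    rw [h2 hd1, hd2]
    push_cast
    linarith

end LexFromBound

section CarryRecurrence

/-- The relation between the errors `e k = ξ αᵏ - round (ξ αᵏ)` and the integer carries `a k`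
produced by the minimal polynomial `X² - b X - 1` of `α`, for bi-infinite sequences. -/
def IsCarryRecurrence (b : ℤ) (e : ℤ → ℝ) (a : ℤ → ℤ) : Prop :=
  ∀ k, e (k + 1) = b * e k + e (k - 1) - a k

variable {b : ℤ} {α V : ℝ} {e : ℤ → ℝ} {a : ℤ → ℤ}

lemma twistedSum_add_two (he : IsCarryRecurrence b e a) (n : ℤ) (k : ℕ) :
    twistedSum e n (k + 2) =
      b * twistedSum e n (k + 1) + twistedSum e n k - twistedSum a n (k + 1) := by
  have hright := he (n + k + 1)
  have hleft := he (n - k - 1)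
  simp only [twistedSum]
  push_cast
  rw [show n + (k : ℤ) + 1 + 1 = n + (k + 2) by ring, add_sub_cancel_right, add_assoc] at hright
  rw [sub_add_cancel, sub_sub _ (1 : ℤ), sub_sub n, sub_sub n, one_add_one_eq_two] at hleft
  linear_combination hright - (-1) ^ k * hleft

/-- Eliminates the contracting eigenvalue `-α⁻¹` of the recurrence in `twistedSum_add_two`. -/
noncomputable def expandingPart (α : ℝ) (e : ℤ → ℝ) (n : ℤ) (k : ℕ) : ℝ :=
  twistedSum e n (k + 1) + α⁻¹ * twistedSum e n k

lemma intCast_eq_sub_inv (hα : 0 < α) (hα2 : α ^ 2 = b * α + 1) : (b : ℝ) = α - α⁻¹ := by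
  field_simp
  linarith

lemma expandingPart_add_one (hα : 0 < α) (hα2 : α ^ 2 = b * α + 1)
    (he : IsCarryRecurrence b e a) (n : ℤ) (k : ℕ) :
    expandingPart α e n (k + 1) = α * expandingPart α e n k - twistedSum a n (k + 1) := by
  simp only [expandingPart]
  rw [twistedSum_add_two he, intCast_eq_sub_inv hα hα2]
  linear_combination -twistedSum e n k * mul_inv_cancel₀ hα.ne'

lemma expandingPart_zero (hα : 0 < α) (hα2 : α ^ 2 = b * α + 1) (he : IsCarryRecurrence b e a)
    (n : ℤ) : expandingPart α e n 0 = (α + α⁻¹) * e n - a n := by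
  have hn := he n
  rw [intCast_eq_sub_inv hα hα2] at hn
  simp only [expandingPart, twistedSum, zero_add, pow_one, pow_zero, Nat.cast_one, Nat.cast_zero,
    add_zero, sub_zero]
  linear_combination hn

lemma abs_twistedSum_le (he : ∀ k, |e k| ≤ V) (n : ℤ) (k : ℕ) : |twistedSum e n k| ≤ 2 * V := by
  calc |twistedSum e n k| ≤ |e (n + k)| + |(-1) ^ k * e (n - k)| := abs_add_le _ _
    _ = |e (n + k)| + |e (n - k)| := by simp [abs_mul]
    _ ≤ 2 * V := by linarith [he (n + k), he (n - k)]

lemma abs_expandingPart_le (hα : 0 < α) (he : ∀ k, |e k| ≤ V) (n : ℤ) (k : ℕ) :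
    |expandingPart α e n k| ≤ 2 * V * (1 + α⁻¹) := by
  have hinv : 0 < α⁻¹ := inv_pos.2 hα
  calc |expandingPart α e n k| ≤ |twistedSum e n (k + 1)| + |α⁻¹ * twistedSum e n k| :=
        abs_add_le _ _
    _ = |twistedSum e n (k + 1)| + α⁻¹ * |twistedSum e n k| := by rw [abs_mul, abs_of_pos hinv]
    _ ≤ 2 * V + α⁻¹ * (2 * V) := by gcongr <;> exact abs_twistedSum_le he _ _
    _ = 2 * V * (1 + α⁻¹) := by ring

lemma critical_mul_add_inv (hα : 0 < α) (hα2 : α ^ 2 = b * α + 1) :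
    b / (1 + α ^ 2) * (α + α⁻¹) = 1 - α⁻¹ ^ 2 := by
  rw [intCast_eq_sub_inv hα hα2]
  field_simp
  ring

lemma two_mul_critical_mul_lt_one (hα : 2 < α) (hα2 : α ^ 2 = b * α + 1) :
    2 * (b / (1 + α ^ 2)) * (1 + α⁻¹) < 1 := by
  rw [intCast_eq_sub_inv (by linarith) hα2]
  field_simp
  have : 0 < (α - 2) * (α * (α ^ 2 - 1)) :=
    mul_pos (by linarith) (mul_pos (by linarith) (by nlinarith))
  linarith

lemma isLexBelow_twistedCorr (hα : 0 < α) (hα2 : α ^ 2 = b * α + 1)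
    (he : IsCarryRecurrence b e a) {η : ℝ} (hη : 0 < η) {n : ℤ} (hn : |a n| = 1)
    (hlead : |(α + α⁻¹) * e n| ≤ 1 - α⁻¹ ^ 2 - η) (hexp : ∀ k, |expandingPart α e n k| < 1)
    {K₀ : ℕ} (hK₀ : 2 ≤ K₀) (hK : 1 ≤ α ^ K₀ * η) : IsLexBelow K₀ (twistedCorr a n) := by
  have habs : |(a n : ℝ)| = 1 := by exact_mod_cast hn
  have hsq : (a n : ℝ) * a n = 1 := by rw [← abs_mul_abs_self, habs, one_mul]
  refine isLexBelow_of_neg_one_lt hα hη (h := fun k ↦ a n * expandingPart α e n k)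
    (fun k ↦ neg_lt_of_abs_lt ?_) (fun k ↦ ?_) ?_ hK₀ hK
  · rw [abs_mul, habs, one_mul]
    exact hexp k
  · rw [expandingPart_add_one hα hα2 he, twistedCorr]
    push_cast
    ring
  · have hle : (a n : ℝ) * ((α + α⁻¹) * e n) ≤ 1 - α⁻¹ ^ 2 - η := by
      refine (le_abs_self _).trans ?_
      rwa [abs_mul, habs, one_mul]
    calc α ^ 2 * (a n * expandingPart α e n 0)
        = α ^ 2 * (a n * ((α + α⁻¹) * e n) - 1) := by
          rw [expandingPart_zero hα hα2 he, mul_sub (a n : ℝ), hsq]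
      _ ≤ α ^ 2 * (-α⁻¹ ^ 2 - η) := mul_le_mul_of_nonneg_left (by linarith) (sq_nonneg α)
      _ = -1 - α ^ 2 * η := by field_simp

theorem IsCarryRecurrence.exists_isAdmissible (hα : 2 < α) (hα2 : α ^ 2 = b * α + 1)
    (he : IsCarryRecurrence b e a) (hV : V < b / (1 + α ^ 2)) (hbd : ∀ k, |e k| ≤ V) :
    ∃ K₀, IsAdmissible K₀ a := by
  have hα0 : 0 < α := by linarith
  have hsum : 0 < α + α⁻¹ := by positivity
  obtain ⟨η, hη, hVη⟩ : ∃ η, 0 < η ∧ V * (α + α⁻¹) = 1 - α⁻¹ ^ 2 - η :=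
    ⟨(b / (1 + α ^ 2) - V) * (α + α⁻¹), mul_pos (sub_pos.2 hV) hsum, by
      rw [← critical_mul_add_inv hα0 hα2]
      ring⟩
  have hlead (n) : |(α + α⁻¹) * e n| ≤ 1 - α⁻¹ ^ 2 - η := by
    rw [abs_mul, abs_of_pos hsum, ← hVη, mul_comm]
    exact mul_le_mul_of_nonneg_right (hbd n) hsum.le
  have hexp (n k) : |expandingPart α e n k| < 1 :=
    (abs_expandingPart_le hα0 hbd n k).trans_lt <|
      (mul_lt_mul_of_pos_right (by linarith) (by positivity)).trans
        (two_mul_critical_mul_lt_one hα hα2)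
  have ha (n) : |a n| ≤ 1 := by
    have hz := hexp n 0
    rw [expandingPart_zero hα0 hα2 he] at hz
    have hz' := abs_lt.1 hz
    have hn := abs_le.1 (hlead n)
    have hpos := sq_nonneg α⁻¹
    have hlt : |(a n : ℝ)| < 2 := abs_lt.2 ⟨by linarith, by linarith⟩
    exact Int.lt_add_one_iff.1 (by exact_mod_cast hlt)
  obtain ⟨K₀, hK, hK₀⟩ := (((tendsto_pow_atTop_atTop_of_one_lt (by linarith : 1 < α)
    ).eventually_ge_atTop (1 / η)).and (eventually_ge_atTop 2)).exists
  refine ⟨K₀, ha, fun n hn ↦ isLexBelow_twistedCorr hα0 hα2 he hη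
    ((ha n).antisymm (Int.one_le_abs hn)) (hlead n) (hexp n) hK₀ ((div_le_iff₀ hη).1 hK)⟩

end CarryRecurrence

/-! ### Carries given by mechanical functions -/

section ExpandingRecurrence

variable {β C D : ℝ} {T w g h : ℕ → ℝ}

lemma nonpos_of_expanding {z : ℕ → ℝ} (hβ : 1 < β) (hz : ∀ k, β * z k ≤ z (k + 1))
    (hC : ∀ k, z k ≤ C) : z 0 ≤ 0 := by
  by_contra! hpos
  have hgrow : ∀ k, β ^ k * z 0 ≤ z k := fun k ↦ by
    induction k with
    | zero => simp
    | succ k ih =>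
      calc β ^ (k + 1) * z 0 = β * (β ^ k * z 0) := by ring
        _ ≤ β * z k := by gcongr
        _ ≤ z (k + 1) := hz k
  obtain ⟨N, hN⟩ := pow_unbounded_of_one_lt (C / z 0) hβ
  exact (hgrow N).not_gt ((hC N).trans_lt ((div_lt_iff₀ hpos).1 hN))

lemma abs_le_of_expanding (hβ : 1 < β) (hT : ∀ k, T (k + 1) = β * T k - g k)
    (hw : ∀ k, w (k + 1) = β * w k - h k) (hgh : ∀ k, |g k| ≤ h k)
    (hTC : ∀ k, |T k| ≤ C) (hwD : ∀ k, |w k| ≤ D) : |T 0| ≤ w 0 := by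
  refine sub_nonpos.1 (nonpos_of_expanding (z := fun k ↦ |T k| - w k) (C := C + D) hβ
    (fun k ↦ ?_) fun k ↦ ?_)
  · have hsub := abs_sub_abs_le_abs_sub (β * T k) (g k)
    rw [abs_mul, abs_of_pos (one_pos.trans hβ)] at hsub
    rw [hT, hw]
    linarith [hgh k]
  · linarith [hTC k, neg_le_of_abs_le (hwD k)]

lemma eq_of_expanding (hβ : 1 < β) (hT : ∀ k, T (k + 1) = β * T k - g k)
    (hw : ∀ k, w (k + 1) = β * w k - g k) (hTC : ∀ k, |T k| ≤ C) (hwD : ∀ k, |w k| ≤ D) :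
    T 0 = w 0 := by
  have hdiff : |T 0 - w 0| ≤ 0 := abs_le_of_expanding (T := fun k ↦ T k - w k) (w := fun _ ↦ 0)
    (g := fun _ ↦ 0) (h := fun _ ↦ 0) hβ (fun k ↦ by rw [hT, hw]; ring) (by simp) (by simp)
    (fun k ↦ (abs_sub _ _).trans (add_le_add (hTC k) (hwD k))) (D := 0) (by simp)
  exact sub_eq_zero.1 (abs_nonpos_iff.1 hdiff)

end ExpandingRecurrence

section PeriodicMajorant

lemma succ_mod_succ_of_ne {j m : ℕ} (h : j % (m + 1) ≠ m) :
    (j + 1) % (m + 1) = j % (m + 1) + 1 := by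
  have := Nat.mod_lt j (by omega : 0 < m + 1)
  rw [← Nat.mod_add_mod, Nat.mod_eq_of_lt (by omega)]

/-- The bounded solution of `w (j + 1) = β * w j - 1_{m + 1 ∤ j + 1}`. -/
noncomputable def periodicMajorant (β : ℝ) (m j : ℕ) : ℝ :=
  1 / (β - 1) - β ^ (j % (m + 1)) / (β ^ (m + 1) - 1)

variable {β : ℝ}

lemma pow_succ_sub_one_pos (hβ : 1 < β) (m : ℕ) : 0 < β ^ (m + 1) - 1 :=
  sub_pos.2 (one_lt_pow₀ hβ m.succ_ne_zero)

lemma periodicMajorant_succ (hβ : 1 < β) (m j : ℕ) : periodicMajorant β m (j + 1) =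
    β * periodicMajorant β m j - if j % (m + 1) = m then 0 else 1 := by
  have hβ1 : β - 1 ≠ 0 := (sub_pos.2 hβ).ne'
  have hpow : β ^ (m + 1) - 1 ≠ 0 := (pow_succ_sub_one_pos hβ m).ne'
  simp only [periodicMajorant]
  split_ifs with hj
  · rw [Nat.succ_mod_succ_eq_zero_iff.2 hj, hj]
    field_simp
    ring
  · rw [succ_mod_succ_of_ne hj]
    field_simp
    ring

lemma abs_periodicMajorant_le (hβ : 1 < β) (m j : ℕ) :
    |periodicMajorant β m j| ≤ 1 / (β - 1) + β ^ m / (β ^ (m + 1) - 1) := by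
  have : 0 < β - 1 := sub_pos.2 hβ
  have hpow := pow_succ_sub_one_pos hβ m
  refine (abs_sub _ _).trans ?_
  rw [abs_of_pos (by positivity : 0 < 1 / (β - 1)),
    abs_of_nonneg (by positivity : 0 ≤ β ^ (j % (m + 1)) / (β ^ (m + 1) - 1))]
  gcongr
  · exact hβ.le
  · exact Nat.lt_succ_iff.1 (Nat.mod_lt _ m.succ_pos)

lemma mul_periodicMajorant_succ (hβ : 1 < β) (c : ℝ) (m j : ℕ) :
    c * periodicMajorant β m (j + 1) =
      β * (c * periodicMajorant β m j) - c * if j % (m + 1) = m then 0 else 1 := by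
  rw [periodicMajorant_succ hβ]
  ring

lemma abs_mul_periodicMajorant_le (hβ : 1 < β) (c : ℝ) (m j : ℕ) :
    |c * periodicMajorant β m j| ≤ |c| * (1 / (β - 1) + β ^ m / (β ^ (m + 1) - 1)) := by
  rw [abs_mul]
  exact mul_le_mul_of_nonneg_left (abs_periodicMajorant_le hβ m j) (abs_nonneg _)

end PeriodicMajorant

section Value

/-- The value of `p_m / q_m` in closed form, with `β = α²`: the supremum of `|e|` over the
solutions of the carry recurrence attached to a mechanical sequence of denominator `m + 1`. -/
noncomputable def spectrumValue (b β : ℝ) (m : ℕ) : ℝ :=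
  b * β * (β ^ m - 1) / ((β + 1) * (β ^ (m + 1) - 1))

variable {b β V : ℝ} {X : ℤ → ℝ} {H : ℤ → ℤ} {m : ℕ}

lemma mul_periodicMajorant_zero (hβ : 1 < β) (hγ : β + β⁻¹ = b ^ 2 + 2) (m : ℕ) :
    b ^ 3 * periodicMajorant β m 0 = (β - β⁻¹) * spectrumValue b β m := by
  have hβ1 : β - 1 ≠ 0 := (sub_pos.2 hβ).ne'
  have hpow : β ^ (m + 1) - 1 ≠ 0 := (pow_succ_sub_one_pos hβ m).ne'
  have hb : b ^ 2 = (β - 1) ^ 2 / β := by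
    rw [← sub_eq_iff_eq_add.2 hγ]
    field_simp
    ring
  rw [pow_succ, hb, periodicMajorant, spectrumValue, Nat.zero_mod, pow_zero]
  field_simp
  ring

/-- The sum of the two values of `X` at distance `j` from `i`, corrected so that the solutions of
`X (i + 1) - (b² + 2) X i + X (i - 1) = -b * secondDiff H i 1` satisfy a recurrence in `j` whose
inhomogeneity only involves `secondDiff H i`. -/
def reflectedSum (b : ℝ) (X : ℤ → ℝ) (H : ℤ → ℤ) (i : ℤ) (j : ℕ) : ℝ :=
  X (i + j) + X (i - j) + b * (secondDiff H i j : ℤ)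

lemma reflectedSum_add_two
    (hX : ∀ i, X (i + 1) - (b ^ 2 + 2) * X i + X (i - 1) = -b * (secondDiff H i 1 : ℤ))
    (i : ℤ) (j : ℕ) : reflectedSum b X H i (j + 2) =
      (b ^ 2 + 2) * reflectedSum b X H i (j + 1) - reflectedSum b X H i j
        - b ^ 3 * (secondDiff H i (j + 1 : ℕ) : ℤ) := by
  have hright := hX (i + j + 1)
  have hleft := hX (i - j - 1)
  simp only [reflectedSum, secondDiff] at *
  push_cast at *
  rw [show i + (j : ℤ) + 1 + 1 = i + (j + 2) by ring, add_sub_cancel_right, add_assoc i] at hright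
  rw [sub_add_cancel, sub_sub _ (1 : ℤ), sub_sub i, sub_sub i, one_add_one_eq_two] at hleft
  linear_combination hright + hleft

lemma abs_reflectedSum_le (hXV : ∀ i, |X i| ≤ V) (hH : ∀ n j, |secondDiff H n j| ≤ 1) (i : ℤ)
    (j : ℕ) : |reflectedSum b X H i j| ≤ 2 * V + |b| := by
  have hdiff : |((secondDiff H i j : ℤ) : ℝ)| ≤ 1 := by exact_mod_cast hH i j
  calc |reflectedSum b X H i j|
      ≤ |X (i + j)| + |X (i - j)| + |b| * |((secondDiff H i j : ℤ) : ℝ)| := by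
        rw [← abs_mul]
        exact abs_add_three _ _ _
    _ ≤ V + V + |b| * 1 := by gcongr <;> apply hXV
    _ = 2 * V + |b| := by ring

lemma exists_expanding_of_recurrence (hβ : 1 < β) (hγ : β + β⁻¹ = b ^ 2 + 2)
    (hX : ∀ i, X (i + 1) - (b ^ 2 + 2) * X i + X (i - 1) = -b * (secondDiff H i 1 : ℤ))
    (hXV : ∀ i, |X i| ≤ V) (hH : ∀ n j, |secondDiff H n j| ≤ 1) (i : ℤ) :
    ∃ T : ℕ → ℝ, T 0 = (β - β⁻¹) * X i ∧
      (∀ j : ℕ, T (j + 1) = β * T j - b ^ 3 * (secondDiff H i (j + 1 : ℕ) : ℤ)) ∧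
      ∃ C, ∀ j, |T j| ≤ C := by
  have hβ0 : 0 < β := one_pos.trans hβ
  refine ⟨fun j ↦ reflectedSum b X H i (j + 1) - β⁻¹ * reflectedSum b X H i j, ?_, fun j ↦ ?_,
    (2 * V + |b|) + 1 * (2 * V + |b|), fun j ↦ ?_⟩
  · have hXi := hX i
    simp only [reflectedSum, zero_add, Nat.cast_one, Nat.cast_zero, add_zero, sub_zero,
      show secondDiff H i 0 = 0 by simp [secondDiff, two_mul], Int.cast_zero, mul_zero]
    linear_combination hXi - X i * hγ
  · simp only
    rw [reflectedSum_add_two hX]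
    linear_combination reflectedSum b X H i j * mul_inv_cancel₀ hβ0.ne' -
      reflectedSum b X H i (j + 1) * hγ
  · refine (abs_sub _ _).trans ?_
    rw [abs_mul, abs_of_pos (inv_pos.2 hβ0)]
    gcongr
    exacts [abs_reflectedSum_le hXV hH _ _, inv_le_one_of_one_le₀ hβ.le,
      abs_reflectedSum_le hXV hH _ _]

lemma IsMechanical.abs_secondDiff_le (hH : IsMechanical (m + 1) H) (n : ℤ) (j : ℕ) :
    |secondDiff H n (j + 1 : ℕ)| ≤ if j % (m + 1) = m then 0 else 1 := by
  split_ifs with hj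
  · rw [hH.secondDiff_eq_zero _ _ (Int.natCast_dvd_natCast.2 (Nat.dvd_of_mod_eq_zero
      (Nat.succ_mod_succ_eq_zero_iff.2 hj))), abs_zero]
  · exact hH.abs_secondDiff_le_one _ _

lemma IsMechanical.exists_secondDiff_eq (hH : IsMechanical (m + 1) H) :
    ∃ n, ∀ j : ℕ, secondDiff H n (j + 1 : ℕ) = -if j % (m + 1) = m then 0 else 1 := by
  obtain ⟨n, hn⟩ := hH.exists_center
  refine ⟨n, fun j ↦ ?_⟩
  split_ifs with hj
  · exact hH.secondDiff_eq_zero _ _ (Int.natCast_dvd_natCast.2 (Nat.dvd_of_mod_eq_zero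
      (Nat.succ_mod_succ_eq_zero_iff.2 hj)))
  · exact hn _ fun hdvd ↦ hj (Nat.succ_mod_succ_eq_zero_iff.1
      (Nat.mod_eq_zero_of_dvd (Int.natCast_dvd_natCast.1 hdvd)))

lemma IsMechanical.abs_le_spectrumValue (hH : IsMechanical (m + 1) H) (hb : 0 ≤ b)
    (hβ : 1 < β) (hγ : β + β⁻¹ = b ^ 2 + 2)
    (hX : ∀ i, X (i + 1) - (b ^ 2 + 2) * X i + X (i - 1) = -b * (secondDiff H i 1 : ℤ))
    (hXV : ∀ i, |X i| ≤ V) (i : ℤ) : |X i| ≤ spectrumValue b β m := by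
  obtain ⟨T, hT0, hT, C, hTC⟩ := exists_expanding_of_recurrence hβ hγ hX hXV
    hH.abs_secondDiff_le_one i
  have hle : |T 0| ≤ b ^ 3 * periodicMajorant β m 0 := abs_le_of_expanding
    (w := fun j ↦ b ^ 3 * periodicMajorant β m j) hβ hT (mul_periodicMajorant_succ hβ _ m)
    (fun j ↦ by
      rw [abs_mul, abs_of_nonneg (pow_nonneg hb 3)]
      gcongr
      exact_mod_cast hH.abs_secondDiff_le i j) hTC (abs_mul_periodicMajorant_le hβ _ m)
  have hβinv : 0 < β - β⁻¹ := sub_pos.2 ((inv_lt_one_of_one_lt₀ hβ).trans hβ)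
  rw [hT0, mul_periodicMajorant_zero hβ hγ, abs_mul, abs_of_pos hβinv] at hle
  exact le_of_mul_le_mul_left hle hβinv

lemma IsMechanical.exists_neg_eq_spectrumValue (hH : IsMechanical (m + 1) H)
    (hβ : 1 < β) (hγ : β + β⁻¹ = b ^ 2 + 2)
    (hX : ∀ i, X (i + 1) - (b ^ 2 + 2) * X i + X (i - 1) = -b * (secondDiff H i 1 : ℤ))
    (hXV : ∀ i, |X i| ≤ V) : ∃ n, -X n = spectrumValue b β m := by
  obtain ⟨n, hn⟩ := hH.exists_secondDiff_eq
  obtain ⟨T, hT0, hT, C, hTC⟩ := exists_expanding_of_recurrence hβ hγ hX hXV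
    hH.abs_secondDiff_le_one n
  have heq : -T 0 = b ^ 3 * periodicMajorant β m 0 := eq_of_expanding (T := fun j ↦ -T j)
    (w := fun j ↦ b ^ 3 * periodicMajorant β m j) hβ
    (fun j ↦ by
      rw [hT, hn]
      push_cast
      ring) (mul_periodicMajorant_succ hβ _ m) (fun j ↦ (abs_neg _).trans_le (hTC j))
    (abs_mul_periodicMajorant_le hβ _ m)
  have hβinv : 0 < β - β⁻¹ := sub_pos.2 ((inv_lt_one_of_one_lt₀ hβ).trans hβ)
  rw [hT0, mul_periodicMajorant_zero hβ hγ, ← mul_neg] at heq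
  exact ⟨n, mul_left_cancel₀ hβinv.ne' heq⟩

theorem IsMechanical.isGreatest_spectrumValue (hH : IsMechanical (m + 1) H) (hb : 0 ≤ b)
    (hβ : 1 < β) (hγ : β + β⁻¹ = b ^ 2 + 2)
    (hX : ∀ i, X (i + 1) - (b ^ 2 + 2) * X i + X (i - 1) = -b * (secondDiff H i 1 : ℤ))
    (hXV : ∀ i, |X i| ≤ V) : IsGreatest (Set.range fun i ↦ |X i|) (spectrumValue b β m) := by
  have hbound := hH.abs_le_spectrumValue hb hβ hγ hX hXV
  obtain ⟨n, hn⟩ := hH.exists_neg_eq_spectrumValue hβ hγ hX hXV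
  refine ⟨⟨n, (hbound n).antisymm ?_⟩, Set.forall_mem_range.2 hbound⟩
  exact hn ▸ neg_le_abs _

end Value

section EvenEntries

variable {b : ℤ} {β V : ℝ} {e : ℤ → ℝ} {a : ℤ → ℤ}

lemma IsCarryRecurrence.mul_odd_entry (he : IsCarryRecurrence b e a)
    (hodd : ∀ i, a (2 * i + 1) = 0) (i : ℤ) :
    b * e (2 * i + 1) = e (2 * (i + 1)) - e (2 * i) := by
  have h := he (2 * i + 1)
  rw [hodd, add_sub_cancel_right, Int.cast_zero, sub_zero] at h
  rw [show 2 * (i + 1) = 2 * i + 1 + 1 by ring, h, add_sub_cancel_right]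

lemma IsCarryRecurrence.even_entry (he : IsCarryRecurrence b e a)
    (hodd : ∀ i, a (2 * i + 1) = 0) (i : ℤ) :
    e (2 * (i + 1)) - (b ^ 2 + 2) * e (2 * i) + e (2 * (i - 1)) = -b * a (2 * i) := by
  have hright := he.mul_odd_entry hodd i
  have hleft := he.mul_odd_entry hodd (i - 1)
  have hmid := he (2 * i)
  rw [sub_add_cancel, show 2 * (i - 1) + 1 = 2 * i - 1 by ring] at hleft
  linear_combination -hright + hleft + b * hmid

theorem IsCarryRecurrence.eq_spectrumValue (he : IsCarryRecurrence b e a)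
    (hodd : ∀ i, a (2 * i + 1) = 0) (hb : 2 ≤ b) (hβ : 1 < β) (hγ : β + β⁻¹ = b ^ 2 + 2)
    (hV : IsGreatest (Set.range fun k ↦ |e k|) V) {H : ℤ → ℤ} {m : ℕ}
    (hHa : ∀ i, secondDiff H i 1 = a (2 * i)) (hH : IsMechanical (m + 1) H) :
    V = spectrumValue b β m := by
  have hbR : (2 : ℝ) ≤ b := by exact_mod_cast hb
  obtain ⟨⟨n, hn⟩, hle⟩ := hH.isGreatest_spectrumValue (X := fun i ↦ e (2 * i)) (by linarith) hβ hγ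
    (fun i ↦ by rw [he.even_entry hodd, hHa]) fun i ↦ hV.2 ⟨2 * i, rfl⟩
  have heven (i) : |e (2 * i)| ≤ spectrumValue b β m := hle ⟨i, rfl⟩
  refine le_antisymm ?_ (hn ▸ hV.2 ⟨2 * n, rfl⟩)
  obtain ⟨⟨k, hk⟩, -⟩ := hV
  rw [← hk]
  rcases Int.even_or_odd' k with ⟨i, rfl | rfl⟩
  · exact heven i
  · have hodd_le : b * |e (2 * i + 1)| ≤ 2 * spectrumValue b β m := by
      have hmul := congrArg abs (he.mul_odd_entry hodd i)
      rw [abs_mul, abs_of_nonneg (by linarith : (0 : ℝ) ≤ b)] at hmul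
      linarith [abs_sub (e (2 * (i + 1))) (e (2 * i)), heven i, heven (i + 1)]
    have := mul_le_mul_of_nonneg_right hbR (abs_nonneg (e (2 * i + 1)))
    linarith

end EvenEntries

/-! ### Limits superior of bounded sequences -/

/-- `v` is the limit superior of the real sequence `u`, in the `ε`-form that, unlike
`Filter.limsup`, has no junk values for unbounded sequences. -/
def HasLimsup (u : ℕ → ℝ) (v : ℝ) : Prop :=
  (∀ c, v < c → ∀ᶠ n in atTop, u n ≤ c) ∧ ∀ c < v, ∃ᶠ n in atTop, c ≤ u n

section HasLimsup

variable {u w δ : ℕ → ℝ} {v C : ℝ}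

theorem isBoundedUnder_le_of_abs_le (hu : ∀ n, |u n| ≤ C) : IsBoundedUnder (· ≤ ·) atTop u :=
  isBoundedUnder_of ⟨C, fun n ↦ (abs_le.1 (hu n)).2⟩

theorem isCoboundedUnder_le_of_abs_le (hu : ∀ n, |u n| ≤ C) : IsCoboundedUnder (· ≤ ·) atTop u :=
  (isBoundedUnder_of ⟨-C, fun n ↦ (abs_le.1 (hu n)).1⟩ :
    IsBoundedUnder (· ≥ ·) atTop u).isCoboundedUnder_le

theorem HasLimsup.limsup_eq (h : HasLimsup u v) (hu : ∀ n, |u n| ≤ C) : limsup u atTop = v :=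
  le_antisymm
    (le_of_forall_gt_imp_ge_of_dense fun c hc ↦
      limsup_le_of_le (isCoboundedUnder_le_of_abs_le hu) (h.1 c hc))
    (le_of_forall_lt_imp_le_of_dense fun c hc ↦
      le_limsup_of_frequently_le (h.2 c hc) (isBoundedUnder_le_of_abs_le hu))

theorem hasLimsup_limsup (hu : ∀ n, |u n| ≤ C) : HasLimsup u (limsup u atTop) :=
  ⟨fun _ hc ↦ (eventually_lt_of_limsup_lt hc (isBoundedUnder_le_of_abs_le hu)).mono
      fun _ ↦ le_of_lt,
    fun _ hc ↦ (frequently_lt_of_lt_limsup (isCoboundedUnder_le_of_abs_le hu) hc).mono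
      fun _ ↦ le_of_lt⟩

theorem HasLimsup.of_abs_sub_le (h : HasLimsup u v) (huw : ∀ n, |u n - w n| ≤ δ n)
    (hδ : Tendsto δ atTop (𝓝 0)) : HasLimsup w v := by
  constructor
  · intro c hc
    filter_upwards [h.1 ((v + c) / 2) (by linarith),
      hδ.eventually_lt_const (show 0 < (c - v) / 2 by linarith)] with n hun hδn
    linarith [(abs_le.1 (huw n)).1]
  · intro c hc
    refine ((h.2 ((v + c) / 2) (by linarith)).and_eventually
      (hδ.eventually_lt_const (show 0 < (v - c) / 2 by linarith))).mono ?_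
    rintro n ⟨hun, hδn⟩
    linarith [(abs_le.1 (huw n)).2]

theorem HasLimsup.mapClusterPt (h : HasLimsup u v) : MapClusterPt v atTop u := by
  rw [mapClusterPt_iff_frequently]
  intro s hs
  obtain ⟨r, hr, hrs⟩ := Metric.mem_nhds_iff.1 hs
  refine ((h.2 (v - r / 2) (by linarith)).and_eventually (h.1 (v + r / 2) (by linarith))).mono ?_
  rintro n ⟨hlow, hupp⟩
  refine hrs ?_
  rw [Metric.mem_ball, Real.dist_eq, abs_lt]
  constructor <;> linarith

theorem tendsto_toNat_add_atTop (k : ℤ) :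
    Tendsto (fun n : ℕ ↦ ((n : ℤ) + k).toNat) atTop atTop := by
  refine tendsto_atTop.2 fun N ↦ ?_
  filter_upwards [eventually_ge_atTop (N + k.natAbs)] with n hn
  omega

theorem exists_tendsto_ultrafilter {ι : Type*} {f : ι → ℝ} (hf : ∀ i, |f i| ≤ C)
    (𝒰 : Ultrafilter ι) : ∃ x, Tendsto f 𝒰 (𝓝 x) := by
  obtain ⟨x, -, hx⟩ := (isCompact_Icc (a := -C) (b := C)).ultrafilter_le_nhds (𝒰.map f)
    (le_principal_iff.2 <| mem_map.2 <| univ_mem' fun i ↦ abs_le.1 (hf i))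
  exact ⟨x, hx⟩

/-- Shift the sequence along an ultrafilter on which `|u n|` tends to its limit superior. -/
theorem HasLimsup.exists_limit_of_shifts (h : HasLimsup (fun n ↦ |u n|) v)
    (hu : ∀ n, |u n| ≤ C) :
    ∃ (𝒰 : Ultrafilter ℕ) (e : ℤ → ℝ), (𝒰 : Filter ℕ) ≤ atTop ∧
      (∀ k : ℤ, Tendsto (fun n : ℕ ↦ u ((n : ℤ) + k).toNat) 𝒰 (𝓝 (e k))) ∧
      IsGreatest (Set.range fun k ↦ |e k|) v := by
  obtain ⟨𝒰, h𝒰, hlim⟩ := mapClusterPt_iff_ultrafilter.1 h.mapClusterPt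
  choose e he using fun k : ℤ ↦
    exists_tendsto_ultrafilter (fun n : ℕ ↦ hu ((n : ℤ) + k).toNat) 𝒰
  refine ⟨𝒰, e, h𝒰, he, ⟨0, tendsto_nhds_unique ?_ hlim⟩, ?_⟩
  · simpa only [add_zero, Int.toNat_natCast] using (he 0).abs
  · rintro _ ⟨k, rfl⟩
    refine le_of_forall_gt_imp_ge_of_dense fun c hc ↦ ?_
    exact le_of_tendsto (he k).abs (h𝒰 ((tendsto_toNat_add_atTop k).eventually (h.1 c hc)))

end HasLimsup

theorem abs_distNearestInt_le_half (x : ℝ) : |distNearestInt x| ≤ 1 / 2 := by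
  rw [distNearestInt, abs_abs]
  exact abs_sub_round x

theorem hasLimsup_limsupDist (α ξ : ℝ) :
    HasLimsup (fun n ↦ |ξ * α ^ n - round (ξ * α ^ n)|) (limsupDist α ξ) :=
  hasLimsup_limsup fun _ ↦ abs_distNearestInt_le_half _

theorem exists_intCast_eq_of_sub_round {b : ℤ} {α : ℝ} (hα2 : α ^ 2 = b * α + 1) (ξ : ℝ) (m : ℕ) :
    ∃ d : ℤ, (d : ℝ) = b * (ξ * α ^ (m + 1) - round (ξ * α ^ (m + 1))) +
      (ξ * α ^ m - round (ξ * α ^ m)) - (ξ * α ^ (m + 2) - round (ξ * α ^ (m + 2))) := by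
  refine ⟨-b * round (ξ * α ^ (m + 1)) - round (ξ * α ^ m) + round (ξ * α ^ (m + 2)), ?_⟩
  push_cast
  linear_combination ξ * α ^ m * hα2

theorem exists_isCarryRecurrence_isGreatest {b : ℤ} {α : ℝ} (hα2 : α ^ 2 = b * α + 1) (ξ : ℝ) :
    ∃ (e : ℤ → ℝ) (a : ℤ → ℤ), IsCarryRecurrence b e a ∧
      IsGreatest (Set.range fun k ↦ |e k|) (limsupDist α ξ) := by
  obtain ⟨𝒰, e, h𝒰, he, hgreatest⟩ :=
    (hasLimsup_limsupDist α ξ).exists_limit_of_shifts fun _ ↦ abs_sub_round _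
  have hint (k : ℤ) : b * e k + e (k - 1) - e (k + 1) ∈ Set.range ((↑) : ℤ → ℝ) := by
    refine Int.isClosedEmbedding_coe_real.isClosed_range.mem_of_tendsto
      ((((he k).const_mul (b : ℝ)).add (he (k - 1))).sub (he (k + 1))) (h𝒰 ?_)
    filter_upwards [eventually_ge_atTop (k.natAbs + 1)] with n hn
    obtain ⟨m, hm⟩ : ∃ m : ℕ, (m : ℤ) = n + (k - 1) := ⟨((n : ℤ) + (k - 1)).toNat, by omega⟩
    rw [show ((n : ℤ) + k).toNat = m + 1 by omega, show ((n : ℤ) + (k - 1)).toNat = m by omega,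
      show ((n : ℤ) + (k + 1)).toNat = m + 2 by omega]
    exact exists_intCast_eq_of_sub_round hα2 ξ m
  choose a ha using hint
  exact ⟨e, a, fun k ↦ by rw [ha]; ring, hgreatest⟩

/-! ### The discrete part of the spectrum -/

section SpectrumValue

variable {b β : ℝ}

lemma spectrumValue_zero : spectrumValue b β 0 = 0 := by simp [spectrumValue]

lemma spectrumValue_eq (hβ : 1 < β) (m : ℕ) :
    spectrumValue b β m = b / (β + 1) * (1 - (β - 1) / (β ^ (m + 1) - 1)) := by
  have hpow := (pow_succ_sub_one_pos hβ m).ne'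
  have hβ1 : β + 1 ≠ 0 := by linarith
  rw [spectrumValue]
  field_simp
  ring

theorem spectrumValue_strictMono (hb : 0 < b) (hβ : 1 < β) : StrictMono (spectrumValue b β) := by
  refine strictMono_nat_of_lt_succ fun n ↦ ?_
  rw [spectrumValue_eq hβ, spectrumValue_eq hβ]
  have hpow : β ^ (n + 1) < β ^ (n + 1 + 1) := pow_lt_pow_right₀ hβ (by omega)
  have hdiv : (β - 1) / (β ^ (n + 1 + 1) - 1) < (β - 1) / (β ^ (n + 1) - 1) :=
    div_lt_div_of_pos_left (by linarith) (pow_succ_sub_one_pos hβ n) (by linarith)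
  exact mul_lt_mul_of_pos_left (by linarith) (div_pos hb (by linarith))

theorem tendsto_spectrumValue (hβ : 1 < β) :
    Tendsto (spectrumValue b β) atTop (𝓝 (b / (β + 1))) := by
  have hpow : Tendsto (fun m : ℕ ↦ β ^ (m + 1) - 1) atTop atTop :=
    tendsto_atTop_add_const_right _ _
      ((tendsto_pow_atTop_atTop_of_one_lt hβ).comp (tendsto_add_atTop_nat 1))
  have hlim := ((hpow.const_div_atTop (β - 1)).const_sub 1).const_mul (b / (β + 1))
  rw [sub_zero, mul_one] at hlim
  exact hlim.congr fun m ↦ (spectrumValue_eq hβ m).symm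

lemma spectrumValue_lt (hb : 0 < b) (hβ : 1 < β) (m : ℕ) : spectrumValue b β m < b / (β + 1) :=
  (spectrumValue_strictMono hb hβ m.lt_succ_self).trans_le
    ((spectrumValue_strictMono hb hβ).monotone.ge_of_tendsto (tendsto_spectrumValue hβ) _)

lemma spectrumValue_nonneg (hb : 0 < b) (hβ : 1 < β) (m : ℕ) : 0 ≤ spectrumValue b β m :=
  spectrumValue_zero.ge.trans ((spectrumValue_strictMono hb hβ).monotone m.zero_le)

end SpectrumValue

lemma eq_of_recurrence {c : ℝ} {u v : ℕ → ℝ} (hu : ∀ n, u (n + 2) = c * u (n + 1) - u n)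
    (hv : ∀ n, v (n + 2) = c * v (n + 1) - v n) (h0 : u 0 = v 0) (h1 : u 1 = v 1) (n : ℕ) :
    u n = v n := by
  induction n using Nat.twoStepInduction with
  | zero => exact h0
  | one => exact h1
  | more n ih ih' => rw [hu, hv, ih, ih']

section Fractions

variable {b : ℤ} {β : ℝ} {p q : ℕ → ℤ}

lemma numerator_even_eq (hβ : 1 < β) (hγ : β + β⁻¹ = b ^ 2 + 2) (hp0 : p 0 = 0) (hp2 : p 2 = b)
    (hpeven : ∀ n : ℕ, p (2 * n + 4) = (b ^ 2 + 2) * p (2 * n + 2) - p (2 * n)) (n : ℕ) :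
    (p (2 * n) : ℝ) = b * β * (β ^ (2 * n) - 1) / (β ^ n * (β ^ 2 - 1)) := by
  have hβ0 : β ≠ 0 := by linarith
  have hβ2 : β ^ 2 - 1 ≠ 0 := (pow_succ_sub_one_pos hβ 1).ne'
  refine eq_of_recurrence (c := β + β⁻¹) (u := fun n ↦ (p (2 * n) : ℝ))
    (v := fun n ↦ b * β * (β ^ (2 * n) - 1) / (β ^ n * (β ^ 2 - 1)))
    (fun n ↦ ?_) (fun n ↦ ?_) ?_ ?_ n
  · rw [hγ]
    exact_mod_cast hpeven n
  · field_simp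
    ring
  · simp [hp0]
  · simp only [mul_one, pow_one, hp2]
    field_simp

lemma denominator_even_eq (hβ : 1 < β) (hγ : β + β⁻¹ = b ^ 2 + 2) (hq0 : q 0 = 1)
    (hq2 : q 2 = b ^ 2 + 3)
    (hqeven : ∀ n : ℕ, q (2 * n + 4) = (b ^ 2 + 2) * q (2 * n + 2) - q (2 * n)) (n : ℕ) :
    (q (2 * n) : ℝ) = (β ^ (2 * n + 1) - 1) / (β ^ n * (β - 1)) := by
  have hβ0 : β ≠ 0 := by linarith
  have hβ1 : β - 1 ≠ 0 := by linarith
  refine eq_of_recurrence (c := β + β⁻¹) (u := fun n ↦ (q (2 * n) : ℝ))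
    (v := fun n ↦ (β ^ (2 * n + 1) - 1) / (β ^ n * (β - 1)))
    (fun n ↦ ?_) (fun n ↦ ?_) ?_ ?_ n
  · rw [hγ]
    exact_mod_cast hqeven n
  · field_simp
    ring
  · simp [hq0, hβ1]
  · have hq : (q 2 : ℝ) = β + β⁻¹ + 1 := by rw [hq2, hγ]; push_cast; ring
    simp only [mul_one, pow_one, hq]
    field_simp
    ring

theorem div_eq_spectrumValue (hβ : 1 < β) (hγ : β + β⁻¹ = b ^ 2 + 2)
    (hp0 : p 0 = 0) (hp2 : p 2 = b)
    (hpeven : ∀ n : ℕ, p (2 * n + 4) = (b ^ 2 + 2) * p (2 * n + 2) - p (2 * n))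
    (hpodd : ∀ n : ℕ, p (2 * n + 1) = p (2 * n) + p (2 * n + 2))
    (hq0 : q 0 = 1) (hq2 : q 2 = b ^ 2 + 3)
    (hqeven : ∀ n : ℕ, q (2 * n + 4) = (b ^ 2 + 2) * q (2 * n + 2) - q (2 * n))
    (hqodd : ∀ n : ℕ, q (2 * n + 1) = q (2 * n) + q (2 * n + 2)) (n : ℕ) :
    (p n : ℝ) / q n = spectrumValue b β n := by
  have hp := numerator_even_eq hβ hγ hp0 hp2 hpeven
  have hq := denominator_even_eq hβ hγ hq0 hq2 hqeven
  have hβ0 : β ≠ 0 := by linarith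
  have hβ1 : β - 1 ≠ 0 := by linarith
  have hβ2 : β + 1 ≠ 0 := by linarith
  have hfactor : β ^ 2 - 1 = (β - 1) * (β + 1) := by ring
  rw [spectrumValue]
  rcases Nat.even_or_odd' n with ⟨m, rfl | rfl⟩
  · have hpow := (pow_succ_sub_one_pos hβ (2 * m)).ne'
    rw [hp, hq, hfactor]
    field_simp
  · have hpow := (pow_succ_sub_one_pos hβ (2 * m + 1)).ne'
    have hp' : (p (2 * m + 1) : ℝ) =
        b * β * (β + 1) * (β ^ (2 * m + 1) - 1) / (β ^ (m + 1) * ((β - 1) * (β + 1))) := by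
      rw [hpodd, Int.cast_add, show 2 * m + 2 = 2 * (m + 1) by ring, hp, hp, hfactor]
      field_simp
      ring
    have hq' : (q (2 * m + 1) : ℝ) =
        (β + 1) * (β ^ (2 * m + 1 + 1) - 1) / (β ^ (m + 1) * (β - 1)) := by
      rw [hqodd, Int.cast_add, show 2 * m + 2 = 2 * (m + 1) by ring, hq, hq]
      field_simp
      ring
    rw [hp', hq']
    field_simp

end Fractions

/-! ### From bounded carry recurrences to `limsupDist` -/

lemma abs_le_abs_sub_intCast {x : ℝ} (hx : |x| ≤ 1 / 2) (k : ℤ) : |x| ≤ |x - k| := by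
  rcases eq_or_ne k 0 with rfl | hk
  · simp
  · have hk1 : (1 : ℝ) ≤ |(k : ℝ)| := by exact_mod_cast Int.one_le_abs hk
    have htri : |(k : ℝ)| ≤ |x| + |x - k| := by
      simpa only [sub_sub_cancel] using abs_sub x (x - k)
    linarith

lemma abs_abs_sub_distNearestInt_le {x y t : ℝ} {k : ℤ} (hx : |x| ≤ 1 / 2) (hk : y + t - x = k) :
    |(|x| - distNearestInt y)| ≤ |t| := by
  rw [distNearestInt, abs_sub_le_iff]
  constructor
  · have hround : |x| ≤ |x - (round y - k : ℤ)| := abs_le_abs_sub_intCast hx _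
    have heq : x - (round y - k : ℤ) = (y - round y) + t := by
      push_cast
      linarith
    rw [heq] at hround
    linarith [abs_add_le (y - round y) t]
  · have hround : |y - round y| ≤ |y - k| := round_le y k
    rw [show y - k = x - t by linarith] at hround
    linarith [abs_sub x t]

lemma exists_sub_eq_intCast_of_recurrence {b : ℤ} {y ε : ℕ → ℝ}
    (hy : ∀ n, y (n + 2) = b * y (n + 1) + y n)
    (hε : ∀ n, ∃ m : ℤ, ε (n + 2) = b * ε (n + 1) + ε n - m) (h0 : y 0 = ε 0) (h1 : y 1 = ε 1)
    (n : ℕ) : ∃ k : ℤ, y n - ε n = k := by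
  induction n using Nat.twoStepInduction with
  | zero => exact ⟨0, by simp [h0]⟩
  | one => exact ⟨0, by simp [h1]⟩
  | more n ih ih' =>
    obtain ⟨k, hk⟩ := ih
    obtain ⟨k', hk'⟩ := ih'
    obtain ⟨m, hm⟩ := hε n
    refine ⟨b * k' + k + m, ?_⟩
    push_cast
    rw [hy, hm, ← hk, ← hk']
    ring

/-- The sequence `u 0, w 0, u 1, w 1, …`. -/
def interleave (u w : ℕ → ℝ) (n : ℕ) : ℝ := if Even n then u (n / 2) else w (n / 2)

section Interleave

variable {u w : ℕ → ℝ}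

lemma interleave_two_mul (i : ℕ) : interleave u w (2 * i) = u i := by
  rw [interleave, if_pos (even_two_mul i), Nat.mul_div_cancel_left i two_pos]

lemma interleave_two_mul_add_one (i : ℕ) : interleave u w (2 * i + 1) = w i := by
  rw [interleave, if_neg (Nat.not_even_two_mul_add_one i), show (2 * i + 1) / 2 = i by omega]

lemma interleave_le {c : ℝ} {N n : ℕ} (hu : ∀ i ≥ N, u i ≤ c)
    (hw : ∀ i, w i ≤ max (u i) (u (i + 1))) (hn : 2 * N ≤ n) : interleave u w n ≤ c := by
  rcases Nat.even_or_odd' n with ⟨i, rfl | rfl⟩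
  · rw [interleave_two_mul]
    exact hu i (by omega)
  · rw [interleave_two_mul_add_one]
    exact (hw i).trans (max_le (hu i (by omega)) (hu (i + 1) (by omega)))

theorem HasLimsup.interleave {v : ℝ} (hu : HasLimsup u v)
    (hw : ∀ i, w i ≤ max (u i) (u (i + 1))) : HasLimsup (interleave u w) v := by
  constructor
  · intro c hc
    obtain ⟨N, hN⟩ := eventually_atTop.1 (hu.1 c hc)
    exact eventually_atTop.2 ⟨2 * N, fun n hn ↦ interleave_le hN hw hn⟩
  · intro c hc
    refine frequently_atTop.2 fun N ↦ ?_
    obtain ⟨i, hi, hci⟩ := frequently_atTop.1 (hu.2 c hc) N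
    exact ⟨2 * i, by omega, by rwa [interleave_two_mul]⟩

lemma abs_interleave (n : ℕ) :
    |interleave u w n| = interleave (fun i ↦ |u i|) (fun i ↦ |w i|) n :=
  apply_ite abs _ _ _

end Interleave

section Realization

variable {b : ℤ} {α ξ v : ℝ}

/-- The conjugate `-1/α` of `α` contributes only a vanishing term to the integer sequence
`ξ α ^ n + (ε 0 - ξ) (-1/α) ^ n - ε n`. -/
theorem limsupDist_eq_of_recurrence (hα : 1 < α) (hα2 : α ^ 2 = b * α + 1) {ε : ℕ → ℝ}
    (hε : ∀ n, ∃ m : ℤ, ε (n + 2) = b * ε (n + 1) + ε n - m) (hbd : ∀ n, |ε n| ≤ 1 / 2)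
    (hv : HasLimsup (fun n ↦ |ε n|) v) (hξ : ε 1 + ε 0 / α = ξ * (α + 1 / α)) :
    limsupDist α ξ = v := by
  have hα0 : α ≠ 0 := by linarith
  have hconj : (-α⁻¹) ^ 2 = b * (-α⁻¹) + 1 := by
    field_simp
    linear_combination -hα2
  have hconj_lt : |(-α⁻¹)| < 1 := by
    rw [abs_neg, abs_inv, abs_of_pos (by linarith)]
    exact inv_lt_one_of_one_lt₀ hα
  have hint := exists_sub_eq_intCast_of_recurrence
    (y := fun n ↦ ξ * α ^ n + (ε 0 - ξ) * (-α⁻¹) ^ n)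
    (fun n ↦ by linear_combination ξ * α ^ n * hα2 + (ε 0 - ξ) * (-α⁻¹) ^ n * hconj)
    hε (by ring) (by field_simp at hξ ⊢; linear_combination -hξ)
  refine HasLimsup.limsup_eq (hv.of_abs_sub_le (δ := fun n ↦ |ε 0 - ξ| * |(-α⁻¹)| ^ n) ?_ ?_)
    fun _ ↦ abs_distNearestInt_le_half _
  · intro n
    obtain ⟨k, hk⟩ := hint n
    rw [← abs_pow, ← abs_mul]
    exact abs_abs_sub_distNearestInt_le (hbd n) hk
  · simpa only [mul_zero] using
      (tendsto_pow_atTop_nhds_zero_of_lt_one (abs_nonneg _) hconj_lt).const_mul |ε 0 - ξ|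

theorem limsupDist_eq_of_even_recurrence (hb : 2 ≤ b) (hα : 1 < α) (hα2 : α ^ 2 = b * α + 1)
    {X : ℕ → ℝ}
    (hX : ∀ i, ∃ d : ℤ, X (i + 2) - (b ^ 2 + 2) * X (i + 1) + X i = -b * d)
    (hbd : ∀ i, |X i| ≤ 1 / 2) (hv : HasLimsup (fun n ↦ |X n|) v)
    (hξ : (X 1 - X 0) / b + X 0 / α = ξ * (α + 1 / α)) : limsupDist α ξ = v := by
  have hb2 : (2 : ℝ) ≤ b := by exact_mod_cast hb
  have hb0 : (b : ℝ) ≠ 0 := by linarith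
  have hodd (i : ℕ) : |(X (i + 1) - X i) / b| ≤ max |X i| |X (i + 1)| := by
    rw [abs_div, abs_of_nonneg (by linarith : (0 : ℝ) ≤ b), div_le_iff₀ (by linarith)]
    have hmax : 0 ≤ max |X i| |X (i + 1)| := (abs_nonneg _).trans (le_max_left _ _)
    linarith [abs_sub (X (i + 1)) (X i), le_max_left |X i| |X (i + 1)|,
      le_max_right |X i| |X (i + 1)|, mul_le_mul_of_nonneg_left hb2 hmax]
  refine limsupDist_eq_of_recurrence hα hα2 (ε := interleave X fun i ↦ (X (i + 1) - X i) / b)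
    (fun n ↦ ?_) (fun n ↦ ?_) ?_ ?_
  · rcases Nat.even_or_odd' n with ⟨i, rfl | rfl⟩
    · refine ⟨0, ?_⟩
      rw [show 2 * i + 2 = 2 * (i + 1) by ring, interleave_two_mul, interleave_two_mul,
        interleave_two_mul_add_one]
      field_simp
      simp
    · obtain ⟨d, hd⟩ := hX i
      refine ⟨d, ?_⟩
      rw [show 2 * i + 1 + 2 = 2 * (i + 1) + 1 by ring, show 2 * i + 1 + 1 = 2 * (i + 1) by ring,
        interleave_two_mul, interleave_two_mul_add_one, interleave_two_mul_add_one]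
      field_simp
      linear_combination hd
  · rw [abs_interleave]
    exact interleave_le (N := 0) (fun i _ ↦ hbd i) hodd n.zero_le
  · simpa only [abs_interleave] using hv.interleave hodd
  · rw [← hξ]
    exact congrArg₂ (· + · / α) (interleave_two_mul_add_one 0) (interleave_two_mul 0)

end Realization

/-! ### Discounted sums of binary sequences -/

/-- Solutions `F` and `P` of the recurrences satisfied by the discounted sums
`L ∑_{t ≥ 0} f (i + t) s ^ t` of the future and `L ∑_{t < i} f (i - 1 - t) s ^ t` of the past
of a binary sequence `f` at time `i`. -/
structure IsDiscountedPair (L s : ℝ) (f : ℕ → Bool) (F P : ℕ → ℝ) : Prop where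
  future : ∀ i, F i = L * (f i).toNat + s * F (i + 1)
  past : ∀ i, P (i + 1) = L * (f i).toNat + s * P i

section Discounted

variable {L s : ℝ} {f : ℕ → Bool} {F P : ℕ → ℝ}

lemma IsDiscountedPair.exists_recurrence {b β : ℝ} (h : IsDiscountedPair L β⁻¹ f F P)
    (hβ : β ≠ 0) (hγ : β + β⁻¹ = b ^ 2 + 2) (hL : L * (1 + β) = b) (i : ℕ) :
    ∃ d : ℤ, (F (i + 2) - P (i + 2)) - (b ^ 2 + 2) * (F (i + 1) - P (i + 1)) + (F i - P i) =
      -b * d := by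
  refine ⟨(f (i + 1)).toNat - (f i).toNat, ?_⟩
  push_cast
  linear_combination -β * h.future (i + 1) + h.future i - h.past (i + 1) + β * h.past i -
    (F (i + 2) - P i) * mul_inv_cancel₀ hβ + (F (i + 1) - P (i + 1)) * hγ -
    ((f (i + 1)).toNat - (f i).toNat) * hL

lemma IsDiscountedPair.future_eq_pow_mul (h : IsDiscountedPair L s f F P) {i R : ℕ}
    (hf : ∀ t < R, f (i + t) = false) : F i = s ^ R * F (i + R) := by
  induction R with
  | zero => simp
  | succ R ih =>
    rw [ih fun t ht ↦ hf t (by omega), h.future (i + R), hf R R.lt_succ_self, Bool.toNat_false,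
      Nat.cast_zero, add_assoc]
    ring

lemma IsDiscountedPair.past_eq_pow_mul (h : IsDiscountedPair L s f F P) {i R : ℕ}
    (hf : ∀ t < R, f (i + t) = false) : P (i + R) = s ^ R * P i := by
  induction R with
  | zero => simp
  | succ R ih =>
    rw [← add_assoc, h.past, ih fun t ht ↦ hf t (by omega), hf R R.lt_succ_self, Bool.toNat_false,
      Nat.cast_zero]
    ring

lemma IsDiscountedPair.future_le (h : IsDiscountedPair L s f F P) (hs1 : s ≤ 1)
    (hF : ∀ i, 0 ≤ F i) {δ : ℝ} {N : ℕ} (hδ : ∀ i ≥ N, f i = true → F (i + 1) ≤ δ)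
    (hf : ∃ᶠ i in atTop, f i = true) {i : ℕ} (hi : N ≤ i) : F i ≤ L + δ := by
  have htrue (k : ℕ) (hk : N ≤ k) (hfk : f k = true) : F k ≤ L + δ := by
    rw [h.future, hfk, Bool.toNat_true, Nat.cast_one, mul_one]
    linarith [mul_le_of_le_one_left (hF (k + 1)) hs1, hδ k hk hfk]
  obtain ⟨j, hij, hfj⟩ := frequently_atTop.1 hf i
  induction hij using Nat.decreasingInduction with
  | self => exact htrue j hi hfj
  | of_succ k _ ih =>
    cases hfk : f k with
    | true => exact htrue k hi hfk
    | false =>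
      rw [h.future, hfk, Bool.toNat_false, Nat.cast_zero, mul_zero, zero_add]
      exact (mul_le_of_le_one_left (hF (k + 1)) hs1).trans (ih (by omega))

lemma IsDiscountedPair.eventually_past_le (h : IsDiscountedPair L s f F P) (hs1 : s ≤ 1)
    (hP : ∀ i, 0 ≤ P i) {δ : ℝ} {N : ℕ} (hδ : ∀ i ≥ N, f i = true → P i ≤ δ)
    (hf : ∃ᶠ i in atTop, f i = true) : ∀ᶠ i in atTop, P i ≤ L + δ := by
  have htrue (k : ℕ) (hk : N ≤ k) (hfk : f k = true) : P (k + 1) ≤ L + δ := by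
    rw [h.past, hfk, Bool.toNat_true, Nat.cast_one, mul_one]
    linarith [mul_le_of_le_one_left (hP k) hs1, hδ k hk hfk]
  obtain ⟨j, hj, hfj⟩ := frequently_atTop.1 hf N
  refine eventually_atTop.2 ⟨j + 1, fun i hi ↦ ?_⟩
  induction i, hi using Nat.le_induction with
  | base => exact htrue j hj hfj
  | succ k hk ih =>
    cases hfk : f k with
    | true => exact htrue k (by omega) hfk
    | false =>
      rw [h.past, hfk, Bool.toNat_false, Nat.cast_zero, mul_zero, zero_add]
      exact (mul_le_of_le_one_left (hP k) hs1).trans ih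

/-- The gaps between consecutive `true` entries of `f` tend to infinity. -/
def IsSparse (f : ℕ → Bool) : Prop :=
  ∀ R, ∀ᶠ i in atTop, f i = true → ∀ j, f j = true → i ≤ j + R → j ≤ i + R → j = i

lemma IsDiscountedPair.eventually_neighbors_le (h : IsDiscountedPair L s f F P) (hs0 : 0 ≤ s)
    (hs1 : s < 1) {M : ℝ} (hF : ∀ i, F i ≤ M) (hP : ∀ i, P i ≤ M) (hf : IsSparse f) {δ : ℝ}
    (hδ : 0 < δ) : ∀ᶠ i in atTop, f i = true → F (i + 1) ≤ δ ∧ P i ≤ δ := by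
  have hlim : Tendsto (fun R : ℕ ↦ s ^ R * M) atTop (𝓝 0) := by
    simpa only [zero_mul] using (tendsto_pow_atTop_nhds_zero_of_lt_one hs0 hs1).mul_const M
  obtain ⟨R, hR⟩ := (hlim.eventually_lt_const hδ).exists
  filter_upwards [hf R, eventually_ge_atTop R] with i hsparse hRi hfi
  have hfalse (j : ℕ) (hne : j ≠ i) (hij : i ≤ j + R) (hji : j ≤ i + R) : f j = false :=
    Bool.eq_false_iff.2 fun hfj ↦ hne (hsparse hfi j hfj hij hji)
  constructor
  · rw [h.future_eq_pow_mul (R := R) fun t ht ↦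
      hfalse (i + 1 + t) (by omega) (by omega) (by omega)]
    exact (mul_le_mul_of_nonneg_left (hF _) (pow_nonneg hs0 R)).trans hR.le
  · rw [← Nat.sub_add_cancel hRi, h.past_eq_pow_mul fun t ht ↦
      hfalse (i - R + t) (by omega) (by omega) (by omega)]
    exact (mul_le_mul_of_nonneg_left (hP _) (pow_nonneg hs0 R)).trans hR.le

theorem IsDiscountedPair.hasLimsup_abs_sub (h : IsDiscountedPair L s f F P) (hs0 : 0 ≤ s)
    (hs1 : s < 1) {M : ℝ} (hF : ∀ i, F i ∈ Set.Icc 0 M) (hP : ∀ i, P i ∈ Set.Icc 0 M)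
    (hf : IsSparse f) (hfreq : ∃ᶠ i in atTop, f i = true) :
    HasLimsup (fun i ↦ |F i - P i|) L := by
  have hsmall {δ : ℝ} (hδ : 0 < δ) : ∀ᶠ i in atTop, f i = true → F (i + 1) ≤ δ ∧ P i ≤ δ :=
    h.eventually_neighbors_le hs0 hs1 (fun i ↦ (hF i).2) (fun i ↦ (hP i).2) hf hδ
  constructor
  · intro c hc
    obtain ⟨N, hN⟩ := eventually_atTop.1 (hsmall (sub_pos.2 hc))
    filter_upwards [eventually_ge_atTop N, h.eventually_past_le hs1.le (fun i ↦ (hP i).1)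
      (fun i hi hfi ↦ (hN i hi hfi).2) hfreq] with i hi hPi
    have hFi := h.future_le hs1.le (fun i ↦ (hF i).1) (fun i hi hfi ↦ (hN i hi hfi).1) hfreq hi
    rw [abs_sub_le_iff]
    constructor <;> linarith [(hF i).1, (hP i).1]
  · intro c hc
    refine (hfreq.and_eventually (hsmall (sub_pos.2 hc))).mono ?_
    rintro i ⟨hfi, hi⟩
    have hFi := h.future i
    rw [hfi, Bool.toNat_true, Nat.cast_one, mul_one] at hFi
    linarith [le_abs_self (F i - P i), (hi hfi).2, mul_nonneg hs0 (hF (i + 1)).1]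

end Discounted

section QuadraticUnit

variable {b : ℤ} {α : ℝ}

lemma sq_add_inv_sq (hα : 0 < α) (hα2 : α ^ 2 = b * α + 1) : α ^ 2 + (α ^ 2)⁻¹ = b ^ 2 + 2 := by
  rw [intCast_eq_sub_inv hα hα2]
  field_simp
  ring

lemma critical_div_one_sub_inv_sq_le_half (hα : 1 < α) (hα2 : α ^ 2 = b * α + 1) :
    b / (1 + α ^ 2) / (1 - (α ^ 2)⁻¹) ≤ 1 / 2 := by
  have hα0 : 0 < α := by linarith
  have hα1 : α ^ 2 - 1 ≠ 0 := (pow_succ_sub_one_pos hα 1).ne'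
  calc b / (1 + α ^ 2) / (1 - (α ^ 2)⁻¹) = α / (1 + α ^ 2) := by
        rw [intCast_eq_sub_inv hα0 hα2]
        field_simp
    _ ≤ 1 / 2 := by
        rw [div_le_div_iff₀ (by positivity) two_pos]
        linarith [sq_nonneg (α - 1)]

theorem IsDiscountedPair.limsupDist_eq {f : ℕ → Bool} {F P : ℕ → ℝ} {ξ v : ℝ}
    (h : IsDiscountedPair (b / (1 + α ^ 2)) (α ^ 2)⁻¹ f F P) (hb : 2 ≤ b) (hα : 1 < α)
    (hα2 : α ^ 2 = b * α + 1) (hbd : ∀ i, |F i - P i| ≤ 1 / 2)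
    (hv : HasLimsup (fun i ↦ |F i - P i|) v)
    (hξ : ((F 1 - P 1) - (F 0 - P 0)) / b + (F 0 - P 0) / α = ξ * (α + 1 / α)) :
    limsupDist α ξ = v :=
  limsupDist_eq_of_even_recurrence hb hα hα2
    (h.exists_recurrence (by positivity) (sq_add_inv_sq (by linarith) hα2)
      (div_mul_cancel₀ _ (by positivity))) hbd hv hξ

end QuadraticUnit

/-! ### Realizing the discrete part -/

section Periodic

variable {β : ℝ}

theorem isDiscountedPair_periodic {A L : ℝ} {m : ℕ} (hβ : β ≠ 0)
    (hA : A * β ^ m = L + β⁻¹ * A) :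
    IsDiscountedPair L β⁻¹ (fun i ↦ decide (i % (m + 1) = m))
      (fun i ↦ A * β ^ (i % (m + 1))) (fun i ↦ A * β ^ (m - i % (m + 1))) := by
  constructor <;> intro i <;> by_cases hi : i % (m + 1) = m
  · simp only [Nat.succ_mod_succ_eq_zero_iff.2 hi, hi, hA, decide_true, Bool.toNat_true,
      Nat.cast_one, pow_zero, mul_one]
  · simp only [succ_mod_succ_of_ne hi, hi, pow_succ, decide_false, Bool.toNat_false, Nat.cast_zero]
    field_simp
    ring
  · simp only [Nat.succ_mod_succ_eq_zero_iff.2 hi, hi, hA, decide_true, Bool.toNat_true,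
      Nat.cast_one, pow_zero, mul_one, Nat.sub_zero, Nat.sub_self]
  · obtain ⟨t, ht⟩ : ∃ t, m - i % (m + 1) = t + 1 :=
      ⟨m - i % (m + 1) - 1, by have := Nat.mod_lt i (Nat.add_one_pos m); omega⟩
    simp only [succ_mod_succ_of_ne hi, hi, ht, show m - (i % (m + 1) + 1) = t by omega, pow_succ,
      decide_false, Bool.toNat_false, Nat.cast_zero]
    field_simp
    ring

lemma abs_sub_periodic_le {A : ℝ} (hA : 0 ≤ A) (hβ : 1 ≤ β) (m i : ℕ) :
    |A * β ^ (i % (m + 1)) - A * β ^ (m - i % (m + 1))| ≤ A * (β ^ m - 1) := by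
  have hrange {j : ℕ} (hj : j ≤ m) : β ^ j ∈ Set.Icc 1 (β ^ m) :=
    ⟨one_le_pow₀ hβ, pow_le_pow_right₀ hβ hj⟩
  have hi := hrange (Nat.lt_succ_iff.1 (Nat.mod_lt i m.succ_pos))
  have hi' := hrange (Nat.sub_le m (i % (m + 1)))
  rw [← mul_sub, abs_mul, abs_of_nonneg hA]
  exact mul_le_mul_of_nonneg_left (abs_sub_le_of_le_of_le hi.1 hi.2 hi'.1 hi'.2) hA

lemma hasLimsup_abs_sub_periodic {A : ℝ} (hA : 0 ≤ A) (hβ : 1 ≤ β) (m : ℕ) :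
    HasLimsup (fun i ↦ |A * β ^ (i % (m + 1)) - A * β ^ (m - i % (m + 1))|) (A * (β ^ m - 1)) := by
  refine ⟨fun c hc ↦ .of_forall fun i ↦ (abs_sub_periodic_le hA hβ m i).trans hc.le,
    fun c hc ↦ frequently_atTop.2 fun N ↦ ⟨m + (m + 1) * N, by nlinarith, ?_⟩⟩
  beta_reduce
  rw [Nat.add_mul_mod_self_left, Nat.mod_eq_of_lt m.lt_succ_self, Nat.sub_self, pow_zero, ← mul_sub]
  exact hc.le.trans (le_abs_self _)

end Periodic

section Realized

variable {b : ℤ} {α : ℝ}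

theorem spectrumValue_mem_specL (hb : 2 ≤ b) (hα : 1 < α) (hα2 : α ^ 2 = b * α + 1) (m : ℕ) :
    spectrumValue b (α ^ 2) m ∈ specL α := by
  have hb0 : (0 : ℝ) < b := by exact_mod_cast (by omega : 0 < b)
  have hβ : 1 < α ^ 2 := one_lt_pow₀ hα two_ne_zero
  have hpow := pow_succ_sub_one_pos hβ m
  set A := b / (1 + α ^ 2) * α ^ 2 / ((α ^ 2) ^ (m + 1) - 1) with hA
  have hA0 : 0 ≤ A := by positivity
  have hpair : IsDiscountedPair (b / (1 + α ^ 2)) (α ^ 2)⁻¹ _ _ _ :=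
    isDiscountedPair_periodic (A := A) (m := m) (by positivity) (by
      rw [hA]
      field_simp
      ring)
  have hvalue : A * ((α ^ 2) ^ m - 1) = spectrumValue b (α ^ 2) m := by
    rw [hA, spectrumValue]
    field_simp
    ring
  have hhalf : A * ((α ^ 2) ^ m - 1) ≤ 1 / 2 := by
    rw [hvalue]
    refine (spectrumValue_lt hb0 hβ m).le.trans
      (le_trans ?_ (critical_div_one_sub_inv_sq_le_half hα hα2))
    rw [add_comm]
    exact le_div_self (by positivity) (sub_pos.2 (inv_lt_one_of_one_lt₀ hβ))
      (sub_le_self _ (by positivity))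
  exact ⟨_, (hpair.limsupDist_eq hb hα hα2
    (fun i ↦ (abs_sub_periodic_le hA0 hβ.le m i).trans hhalf)
    (hasLimsup_abs_sub_periodic hA0 hβ.le m) (div_mul_cancel₀ _ (by positivity)).symm).trans hvalue⟩

end Realized

/-! ### Realizing the critical value -/

open Cardinal (cantorFunction cantorFunction_succ cantorFunction_le cantorFunction_injective)

/-- The discounted sum `L ∑_{t < i} f (i - 1 - t) s ^ t`. -/
def discountedPast (L s : ℝ) (f : ℕ → Bool) : ℕ → ℝ
  | 0 => 0
  | i + 1 => L * (f i).toNat + s * discountedPast L s f i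

section Cantor

variable {L s : ℝ}

lemma cantorFunction_eq (hs0 : 0 ≤ s) (hs1 : s < 1) (f : ℕ → Bool) :
    cantorFunction s f = (f 0).toNat + s * cantorFunction s fun n ↦ f (n + 1) := by
  rw [cantorFunction_succ f hs0 hs1]
  cases f 0 <;> simp

lemma cantorFunction_mem_Icc (hs0 : 0 ≤ s) (hs1 : s < 1) (f : ℕ → Bool) :
    cantorFunction s f ∈ Set.Icc 0 (1 / (1 - s)) := by
  have htrue := cantorFunction_eq hs0 hs1 fun _ ↦ true
  have hle : cantorFunction s f ≤ cantorFunction s fun _ ↦ true :=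
    cantorFunction_le hs0 hs1 fun _ _ ↦ rfl
  rw [Bool.toNat_true, Nat.cast_one] at htrue
  refine ⟨tsum_nonneg fun n ↦ Cardinal.cantorFunctionAux_nonneg hs0, ?_⟩
  rw [le_div_iff₀ (sub_pos.2 hs1)]
  linarith [mul_le_mul_of_nonneg_right hle (sub_pos.2 hs1).le]

lemma mul_cantorFunction_mem_Icc (hL : 0 ≤ L) (hs0 : 0 ≤ s) (hs1 : s < 1) (f : ℕ → Bool) :
    L * cantorFunction s f ∈ Set.Icc 0 (L / (1 - s)) := by
  obtain ⟨hnonneg, hle⟩ := cantorFunction_mem_Icc hs0 hs1 f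
  exact ⟨mul_nonneg hL hnonneg, (mul_le_mul_of_nonneg_left hle hL).trans_eq (mul_one_div L _)⟩

lemma discountedPast_mem_Icc (hL : 0 ≤ L) (hs0 : 0 ≤ s) (hs1 : s < 1) (f : ℕ → Bool) (i : ℕ) :
    discountedPast L s f i ∈ Set.Icc 0 (L / (1 - s)) := by
  have hs : 0 < 1 - s := sub_pos.2 hs1
  induction i with
  | zero => exact ⟨le_rfl, by rw [discountedPast]; positivity⟩
  | succ i ih =>
    rw [discountedPast]
    refine ⟨add_nonneg (by positivity) (mul_nonneg hs0 ih.1), ?_⟩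
    calc L * (f i).toNat + s * discountedPast L s f i ≤ L * 1 + s * (L / (1 - s)) :=
          add_le_add (mul_le_mul_of_nonneg_left (by exact_mod_cast (f i).toNat_le) hL)
            (mul_le_mul_of_nonneg_left ih.2 hs0)
      _ = L / (1 - s) := by
          field_simp
          ring

theorem isDiscountedPair_cantorFunction (hs0 : 0 ≤ s) (hs1 : s < 1) (f : ℕ → Bool) :
    IsDiscountedPair L s f (fun i ↦ L * cantorFunction s fun t ↦ f (i + t))
      (discountedPast L s f) where
  future i := by
    rw [cantorFunction_eq hs0 hs1]
    simp only [add_zero, add_assoc, add_comm 1]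
    ring
  past _ := rfl

end Cantor

theorem limsupDist_cantorFunction {b : ℤ} {α : ℝ} (hb : 2 ≤ b) (hα : 1 < α)
    (hα2 : α ^ 2 = b * α + 1) {f : ℕ → Bool} (hf : IsSparse f)
    (hfreq : ∃ᶠ i in atTop, f i = true) (hf0 : f 0 = false) :
    limsupDist α (b / (1 + α ^ 2) * cantorFunction (α ^ 2)⁻¹ f) = b / (1 + α ^ 2) := by
  have hs0 : 0 ≤ (α ^ 2)⁻¹ := by positivity
  have hs1 : (α ^ 2)⁻¹ < 1 := inv_lt_one_of_one_lt₀ (one_lt_pow₀ hα two_ne_zero)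
  have hL : 0 ≤ b / (1 + α ^ 2) :=
    div_nonneg (by exact_mod_cast (by omega : 0 ≤ b)) (by positivity)
  have hpair := isDiscountedPair_cantorFunction (L := b / (1 + α ^ 2)) hs0 hs1 f
  have hF (i : ℕ) := mul_cantorFunction_mem_Icc hL hs0 hs1 fun t ↦ f (i + t)
  have hP := discountedPast_mem_Icc hL hs0 hs1 f
  refine hpair.limsupDist_eq hb hα hα2 (fun i ↦ ?_)
    (hpair.hasLimsup_abs_sub hs0 hs1 hF hP hf hfreq) ?_
  · exact (abs_sub_le_of_nonneg_of_le (hF i).1 (hF i).2 (hP i).1 (hP i).2).trans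
      (critical_div_one_sub_inv_sq_le_half hα hα2)
  · have hfuture := hpair.future 0
    have hpast : discountedPast (b / (1 + α ^ 2)) (α ^ 2)⁻¹ f 1 = 0 := by simp [discountedPast, hf0]
    simp only [zero_add, hf0, Bool.toNat_false, Nat.cast_zero, mul_zero] at hfuture ⊢
    rw [hpast, discountedPast, sub_zero, sub_zero, (inv_mul_eq_iff_eq_mul₀ (by positivity)).1
      hfuture.symm]
    generalize b / (1 + α ^ 2) * cantorFunction (α ^ 2)⁻¹ f = ξ
    field_simp
    linear_combination α * ξ * hα2

open Classical in
/-- The indicator sequence of the odd squares together with the even squares `(2 * k + 2) ^ 2`,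
`k ∈ x`; it encodes an arbitrary set `x` by a sparse sequence. -/
noncomputable def sparseCode (x : Set ℕ) (i : ℕ) : Bool :=
  decide (∃ k, i = (2 * k + 1) ^ 2 ∨ k ∈ x ∧ i = (2 * k + 2) ^ 2)

section SparseCode

variable {x : Set ℕ} {i : ℕ}

lemma sparseCode_eq_true :
    sparseCode x i = true ↔ ∃ k, i = (2 * k + 1) ^ 2 ∨ k ∈ x ∧ i = (2 * k + 2) ^ 2 := by
  classical exact decide_eq_true_iff

lemma exists_eq_sq_of_sparseCode (h : sparseCode x i = true) : ∃ n, 0 < n ∧ i = n ^ 2 := by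
  obtain ⟨k, rfl | ⟨-, rfl⟩⟩ := sparseCode_eq_true.1 h
  exacts [⟨_, by omega, rfl⟩, ⟨_, by omega, rfl⟩]

lemma sparseCode_zero : sparseCode x 0 = false := by
  rw [Bool.eq_false_iff]
  intro h
  obtain ⟨n, hn, h0⟩ := exists_eq_sq_of_sparseCode h
  exact (pow_pos hn 2).ne h0

lemma sparseCode_even_sq (k : ℕ) : sparseCode x ((2 * k + 2) ^ 2) = true ↔ k ∈ x := by
  rw [sparseCode_eq_true]
  refine ⟨?_, fun hk ↦ ⟨k, Or.inr ⟨hk, rfl⟩⟩⟩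
  rintro ⟨j, hj | ⟨hjx, hj⟩⟩
  · have := Nat.pow_left_injective two_ne_zero hj
    omega
  · have := Nat.pow_left_injective two_ne_zero hj
    rwa [show k = j by omega]

lemma sparseCode_injective : Function.Injective sparseCode := by
  intro x y hxy
  ext k
  rw [← sparseCode_even_sq, ← sparseCode_even_sq, hxy]

lemma frequently_sparseCode (x : Set ℕ) : ∃ᶠ i in atTop, sparseCode x i = true :=
  frequently_atTop.2 fun N ↦
    ⟨(2 * N + 1) ^ 2, by nlinarith, sparseCode_eq_true.2 ⟨N, Or.inl rfl⟩⟩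

lemma isSparse_sparseCode (x : Set ℕ) : IsSparse (sparseCode x) := by
  intro R
  filter_upwards [eventually_ge_atTop ((R + 1) ^ 2)] with i hi hfi j hfj hij hji
  obtain ⟨n, -, rfl⟩ := exists_eq_sq_of_sparseCode hfi
  obtain ⟨m, -, rfl⟩ := exists_eq_sq_of_sparseCode hfj
  have hRn : R + 1 ≤ n := (Nat.pow_le_pow_iff_left two_ne_zero).1 hi
  rcases lt_trichotomy m n with h | rfl | h
  · nlinarith
  · rfl
  · nlinarith

end SparseCode

theorem not_countable_limsupDist_eq_critical {b : ℤ} {α : ℝ} (hb : 2 ≤ b) (hα : 2 ≤ α)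
    (hα2 : α ^ 2 = b * α + 1) :
    ¬ Set.Countable {ξ : ℝ | limsupDist α ξ = b / (1 + α ^ 2)} := by
  intro hcount
  have hL : b / (1 + α ^ 2) ≠ 0 :=
    div_ne_zero (by exact_mod_cast (by omega : b ≠ 0)) (by positivity)
  have hs : (α ^ 2)⁻¹ < 1 / 2 := by
    rw [inv_lt_comm₀ (by positivity) (by norm_num)]
    nlinarith
  have hinj : Function.Injective fun x ↦
      b / (1 + α ^ 2) * cantorFunction (α ^ 2)⁻¹ (sparseCode x) :=
    (mul_right_injective₀ hL).comp
      ((cantorFunction_injective (by positivity) hs).comp sparseCode_injective)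
  have hmaps : Set.MapsTo (fun x ↦ b / (1 + α ^ 2) * cantorFunction (α ^ 2)⁻¹ (sparseCode x))
      Set.univ {ξ : ℝ | limsupDist α ξ = b / (1 + α ^ 2)} := fun x _ ↦
    limsupDist_cantorFunction hb (by linarith) hα2 (isSparse_sparseCode x)
      (frequently_sparseCode x) sparseCode_zero
  have hsets : Countable (Set ℕ) :=
    Set.countable_univ_iff.1 (hmaps.countable_of_injOn hinj.injOn hcount)
  obtain ⟨g, hg⟩ := hsets.exists_injective_nat
  exact Function.cantor_injective g hg

/-! ### The spectrum below the critical value -/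

section BelowCritical

variable {b : ℤ} {α V : ℝ} {e : ℤ → ℝ} {a : ℤ → ℤ}

lemma IsCarryRecurrence.shift (he : IsCarryRecurrence b e a) :
    IsCarryRecurrence b (fun k ↦ e (k + 1)) fun k ↦ a (k + 1) := by
  intro k
  have hk := he (k + 1)
  rwa [add_sub_right_comm k 1 1] at hk

lemma IsCarryRecurrence.exists_eq_spectrumValue (he : IsCarryRecurrence b e a)
    (hb : 2 ≤ b) (hα : 2 < α) (hα2 : α ^ 2 = b * α + 1) (hodd : ∀ i, a (2 * i + 1) = 0)
    (hV : V < b / (1 + α ^ 2)) (hmax : IsGreatest (Set.range fun k ↦ |e k|) V) :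
    ∃ m, V = spectrumValue b (α ^ 2) m := by
  obtain ⟨K₀, hadm⟩ := exists_isAdmissible hα hα2 he hV fun k ↦ hmax.2 ⟨k, rfl⟩
  obtain ⟨H, hstep, hHa, hbal⟩ := hadm.exists_isSignBalanced hodd
  obtain ⟨Q, hQ, hmech⟩ := hbal.exists_isMechanical hstep
  obtain ⟨m, rfl⟩ := Nat.exists_eq_add_of_lt hQ
  rw [zero_add] at hmech
  exact ⟨m, he.eq_spectrumValue hodd hb (one_lt_pow₀ (by linarith) two_ne_zero)
    (sq_add_inv_sq (by linarith) hα2) hmax hHa hmech⟩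

theorem exists_limsupDist_eq_spectrumValue (hb : 2 ≤ b) (hα : 2 < α)
    (hα2 : α ^ 2 = b * α + 1) {ξ : ℝ} (hξ : limsupDist α ξ < b / (1 + α ^ 2)) :
    ∃ m, limsupDist α ξ = spectrumValue b (α ^ 2) m := by
  obtain ⟨e, a, he, hmax⟩ := exists_isCarryRecurrence_isGreatest hα2 ξ
  by_cases hodd : ∀ i, a (2 * i + 1) = 0
  · exact he.exists_eq_spectrumValue hb hα hα2 hodd hξ hmax
  · push Not at hodd
    obtain ⟨i₀, hi₀⟩ := hodd
    obtain ⟨K₀, hadm⟩ :=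
      IsCarryRecurrence.exists_isAdmissible hα hα2 he hξ fun k ↦ hmax.2 ⟨k, rfl⟩
    have hshift : ∀ i, a (2 * i + 1 + 1) = 0 := by
      intro i
      by_contra hi
      obtain ⟨r, hr⟩ := hadm.even_sub hi₀ hi
      omega
    have hrange : (Set.range fun k ↦ |e (k + 1)|) = Set.range fun k ↦ |e k| :=
      (Equiv.addRight (1 : ℤ)).surjective.range_comp fun k ↦ |e k|
    exact he.shift.exists_eq_spectrumValue hb hα hα2 hshift hξ (by rwa [hrange])

theorem specL_inter_Icc_critical (hb : 2 ≤ b) (hα : 2 < α) (hα2 : α ^ 2 = b * α + 1) :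
    specL α ∩ Set.Icc 0 (b / (1 + α ^ 2)) =
      Set.range (spectrumValue b (α ^ 2)) ∪ {b / (1 + α ^ 2)} := by
  have hb0 : (0 : ℝ) < b := by exact_mod_cast (by omega : 0 < b)
  have hβ : 1 < α ^ 2 := one_lt_pow₀ (by linarith) two_ne_zero
  ext l
  constructor
  · rintro ⟨⟨ξ, rfl⟩, -, hle⟩
    rcases hle.lt_or_eq with hlt | heq
    · obtain ⟨m, hm⟩ := exists_limsupDist_eq_spectrumValue hb hα hα2 hlt
      exact Or.inl ⟨m, hm.symm⟩
    · exact Or.inr heq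
  · rintro (⟨m, rfl⟩ | rfl)
    · refine ⟨spectrumValue_mem_specL hb (by linarith) hα2 m, spectrumValue_nonneg hb0 hβ m, ?_⟩
      rw [add_comm]
      exact (spectrumValue_lt hb0 hβ m).le
    · exact ⟨⟨_, limsupDist_cantorFunction hb (by linarith) hα2 (isSparse_sparseCode ∅)
        (frequently_sparseCode ∅) sparseCode_zero⟩, by positivity, le_rfl⟩

end BelowCritical

end MarkoffLagrange

open MarkoffLagrange

theorem stmt6_general (b : ℤ) (hb : 2 ≤ b) (α : ℝ)
    (hα : α = ((b : ℝ) + Real.sqrt ((b : ℝ) ^ 2 + 4)) / 2)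
    (p q : ℕ → ℤ)
    (hp0 : p 0 = 0) (hp2 : p 2 = b)
    (hpeven : ∀ n : ℕ, p (2 * n + 4) = (b ^ 2 + 2) * p (2 * n + 2) - p (2 * n))
    (hpodd : ∀ n : ℕ, p (2 * n + 1) = p (2 * n) + p (2 * n + 2))
    (hq0 : q 0 = 1) (hq2 : q 2 = b ^ 2 + 3)
    (hqeven : ∀ n : ℕ, q (2 * n + 4) = (b ^ 2 + 2) * q (2 * n + 2) - q (2 * n))
    (hqodd : ∀ n : ℕ, q (2 * n + 1) = q (2 * n) + q (2 * n + 2)) :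
    StrictMono (fun n : ℕ => (p n : ℝ) / (q n : ℝ)) ∧
    Filter.Tendsto (fun n : ℕ => (p n : ℝ) / (q n : ℝ)) Filter.atTop
      (nhds ((b : ℝ) / (1 + α ^ 2))) ∧
    (specL α ∩ Set.Icc 0 ((b : ℝ) / (1 + α ^ 2)) =
      {x : ℝ | ∃ n : ℕ, x = (p n : ℝ) / (q n : ℝ)} ∪ {(b : ℝ) / (1 + α ^ 2)}) ∧
    ¬ Set.Countable {ξ : ℝ | limsupDist α ξ = (b : ℝ) / (1 + α ^ 2)} := by
  have hb2 : (2 : ℝ) ≤ b := by exact_mod_cast hb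
  have hsqrt : (b : ℝ) < Real.sqrt ((b : ℝ) ^ 2 + 4) := Real.lt_sqrt_of_sq_lt (by linarith)
  have hα_gt : 2 < α := by linarith
  have hα2 : α ^ 2 = b * α + 1 := by
    rw [hα]
    linear_combination Real.sq_sqrt (by positivity : (0 : ℝ) ≤ (b : ℝ) ^ 2 + 4) / 4
  have hβ : 1 < α ^ 2 := one_lt_pow₀ (by linarith) two_ne_zero
  have hratio := div_eq_spectrumValue hβ (sq_add_inv_sq (by linarith) hα2) hp0 hp2 hpeven hpodd
    hq0 hq2 hqeven hqodd
  simp only [hratio]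
  refine ⟨spectrumValue_strictMono (by linarith) hβ, ?_, ?_,
    not_countable_limsupDist_eq_critical hb hα_gt.le hα2⟩
  · rw [add_comm]
    exact tendsto_spectrumValue hβ
  · simpa only [Set.range, eq_comm] using specL_inter_Icc_critical hb hα_gt hα2

theorem stmt6 (b : ℤ) (hb : 3 ≤ b) (α : ℝ)
    (hα : α = ((b : ℝ) + Real.sqrt ((b : ℝ) ^ 2 + 4)) / 2)
    (p q : ℕ → ℤ)
    (hp0 : p 0 = 0) (hp2 : p 2 = b)
    (hpeven : ∀ n : ℕ, p (2 * n + 4) = (b ^ 2 + 2) * p (2 * n + 2) - p (2 * n))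
    (hpodd : ∀ n : ℕ, p (2 * n + 1) = p (2 * n) + p (2 * n + 2))
    (hq0 : q 0 = 1) (hq2 : q 2 = b ^ 2 + 3)
    (hqeven : ∀ n : ℕ, q (2 * n + 4) = (b ^ 2 + 2) * q (2 * n + 2) - q (2 * n))
    (hqodd : ∀ n : ℕ, q (2 * n + 1) = q (2 * n) + q (2 * n + 2)) :
    StrictMono (fun n : ℕ => (p n : ℝ) / (q n : ℝ)) ∧
    Filter.Tendsto (fun n : ℕ => (p n : ℝ) / (q n : ℝ)) Filter.atTop
      (nhds ((b : ℝ) / (1 + α ^ 2))) ∧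
    (specL α ∩ Set.Icc 0 ((b : ℝ) / (1 + α ^ 2)) =
      {x : ℝ | ∃ n : ℕ, x = (p n : ℝ) / (q n : ℝ)} ∪ {(b : ℝ) / (1 + α ^ 2)}) ∧
    ¬ Set.Countable {ξ : ℝ | limsupDist α ξ = (b : ℝ) / (1 + α ^ 2)} :=
  stmt6_general b (by omega) α hα p q hp0 hp2 hpeven hpodd hq0 hq2 hqeven hqodd
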